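/- Let 1 < α < 2 and let ψ : ℝ → [0,1] be a smooth even function supported in (−2π, 2π) with ψ = 1 on [−π, π]; set η(ξ) = ψ(‖ξ‖) − ψ(2‖ξ‖) for ξ ∈ ℝ² (so η is supported in the annulus π/2 ≤ ‖ξ‖ ≤ 2π). Then there exists a constant C = C(α, ψ) > 0 such that for every dyadic number N = 2^{−k} with k ∈ ℕ ∪ {0}, every v ∈ ℝ², and every τ > 0, |∫_{[−π,π]²} e^{iτ(v·ξ − w_α(ξ))} η(ξ/N) dξ| ≤ C · N^{2 − (3/4)α} · τ^{−3/4}. (This frequency-localized oscillatory integral bound is equivalent, after rescaling ξ ↦ ξ/h, τ = 2^α t/h^α, v = x/(hτ), to the uniform-in-h dispersive estimate ‖U_h(t)P_N f‖_{L^∞_h} ≤ C (N/h)^{2 − (3/4)α} |t|^{−3/4} ‖f‖_{L^1_h} for U_h(t) = e^{−it(−Δ_h)^{α/2}} on hℤ².) -/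

import Mathlib

open Real MeasureTheory

/-!
Substituting `ξ = N ζ` turns the symbol into `N²` times `N⁻² (sin² (N ζ₁ / 2) + sin² (N ζ₂ / 2))`,
which extends smoothly to `N = 0`, where it is `|ζ|² / 4`. By compactness in `(N, ζ)`, uniform
decay therefore follows from decay near each point, with `N` as a parameter.

Write `w` for the rescaled dispersion relation. Near a point where `∂₁² w ≠ 0`, the coordinates
`m = ∂₁ w` and `y = ζ₂` and the partial Legendre transform `G` of `w` turn the phase `v · ζ - w`
into `v₂ y + (v₁ - m) ∂ₘ G + G`. Integration in `m` gains `τ ^ (-1/2)`, and van der Corput's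
lemma in `y` gains `τ ^ (-1/k)`, where `k` is the order of the first nonvanishing `y`-derivative
of `G`, `k ≥ 2`. These derivatives are those of `-∂₂ w` along the level curves of `∂₁ w`: the
first is governed by the Hessian determinant, the second by the derivative of that determinant
along the curve, and at the cusps the third is nonzero. Hence `k ≤ 4`, and `1/2 + 1/4 = 3/4`.

The faces of the cell `‖N ζ‖_∞ ≤ π` are level sets of the coordinates `m` and `y`, so the sharp
cutoff is a rectangle in `(m, y)`. Points with `∂₁² w = 0` are reached by exchanging the
variables, or by a shear when `∂₂² w` vanishes as well.
-/

namespace LatticeDispersion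

open Set Filter
open scoped ContDiff Topology

/-! ### Oscillatory integrals in one variable -/

section OneVariable

variable {E : Type*} [NormedAddCommGroup E] [NormedSpace ℝ E] {a b c l δ : ℝ} {f f' : ℝ → ℝ}

theorem norm_integral_le_of_forall_away {g : ℝ → E} {M₀ M : ℝ} (hab : a ≤ b) (hδ : 0 ≤ δ)
    (hg : ContinuousOn g (Icc a b)) (hM₀ : ∀ x ∈ Icc a b, ‖g x‖ ≤ M₀) (hM : 0 ≤ M)
    (h : ∀ p q, p ≤ q → Icc p q ⊆ Icc a b → (∀ x ∈ Icc p q, δ ≤ |x - c|) →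
      ‖∫ x in p..q, g x‖ ≤ M) :
    ‖∫ x in a..b, g x‖ ≤ 2 * δ * M₀ + 2 * M := by
  set p := max a (min b (c - δ)) with hp
  set q := min b (max a (c + δ)) with hq
  have hpab : p ∈ Icc a b := ⟨le_max_left _ _, max_le hab (min_le_left _ _)⟩
  have hqab : q ∈ Icc a b := ⟨le_min hab (le_max_left _ _), min_le_left _ _⟩
  have hpq : p ≤ q := max_le hqab.1
    (le_min (min_le_left _ _) ((min_le_right _ _).trans (le_max_of_le_right (by linarith))))
  have hlen : q - p ≤ 2 * δ := by rw [hp, hq]; grind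
  have left : ‖∫ x in a..p, g x‖ ≤ M := by
    rcases eq_or_lt_of_le hpab.1 with hap | hap
    · rwa [← hap, intervalIntegral.integral_same, norm_zero]
    · refine h a p hap.le (Icc_subset_Icc_right hpab.2) fun x hx => ?_
      have : p ≤ c - δ := by rw [hp] at hap ⊢; grind
      exact le_abs.2 (Or.inr (by linarith [hx.2]))
  have right : ‖∫ x in q..b, g x‖ ≤ M := by
    rcases eq_or_lt_of_le hqab.2 with hqb | hqb
    · rwa [hqb, intervalIntegral.integral_same, norm_zero]
    · refine h q b hqb.le (Icc_subset_Icc_left hqab.1) fun x hx => ?_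
      have : c + δ ≤ q := by rw [hq] at hqb ⊢; grind
      exact le_abs.2 (Or.inl (by linarith [hx.1]))
  have middle : ‖∫ x in p..q, g x‖ ≤ 2 * δ * M₀ := by
    have h₁ := intervalIntegral.norm_integral_le_of_norm_le_const (a := p) (b := q) (C := M₀)
      fun x hx => hM₀ x (Icc_subset_Icc hpab.1 hqab.2 (Ioc_subset_Icc_self (uIoc_of_le hpq ▸ hx)))
    rw [abs_of_nonneg (sub_nonneg.2 hpq), mul_comm] at h₁
    exact h₁.trans (mul_le_mul_of_nonneg_right hlen
      ((norm_nonneg _).trans (hM₀ a (left_mem_Icc.2 hab))))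
  have hint : ∀ s ∈ Icc a b, ∀ t ∈ Icc a b, IntervalIntegrable g volume s t := fun s hs t ht =>
    (hg.mono (ordConnected_Icc.uIcc_subset hs ht)).intervalIntegrable
  rw [← intervalIntegral.integral_add_adjacent_intervals
      (hint a (left_mem_Icc.2 hab) q hqab) (hint q hqab b (right_mem_Icc.2 hab)),
    ← intervalIntegral.integral_add_adjacent_intervals
      (hint a (left_mem_Icc.2 hab) p hpab) (hint p hpab q hqab)]
  linarith [norm_add₃_le (a := ∫ x in a..p, g x) (b := ∫ x in p..q, g x) (c := ∫ x in q..b, g x)]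

theorem integral_deriv_div_sq_le {μ : ℝ} (hab : a ≤ b)
    (hf : ∀ x ∈ Icc a b, HasDerivAt f (f' x) x) (hf'c : ContinuousOn f' (Icc a b)) (hμ : 0 < μ)
    (hfμ : ∀ x ∈ Icc a b, μ ≤ |f x|) :
    ∫ x in a..b, f' x / f x ^ 2 ≤ 2 / μ := by
  have hne : ∀ x ∈ Icc a b, f x ≠ 0 := fun x hx => abs_pos.1 (hμ.trans_le (hfμ x hx))
  have hfc : ContinuousOn f (Icc a b) := HasDerivAt.continuousOn hf
  have hinv : ∀ x ∈ Icc a b, |(f x)⁻¹| ≤ 1 / μ := fun x hx => by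
    rw [abs_inv, one_div]
    exact inv_anti₀ hμ (hfμ x hx)
  have hderiv : ∀ x ∈ uIcc a b, HasDerivAt (fun x => -(f x)⁻¹) (f' x / f x ^ 2) x := fun x hx => by
    rw [uIcc_of_le hab] at hx
    exact ((hf x hx).inv (hne x hx)).neg.congr_deriv (by ring)
  rw [intervalIntegral.integral_eq_sub_of_hasDerivAt hderiv]
  · have ha := abs_le.1 (hinv a (left_mem_Icc.2 hab))
    have hb := abs_le.1 (hinv b (right_mem_Icc.2 hab))
    rw [show 2 / μ = 1 / μ + 1 / μ by ring]
    linarith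
  · refine ContinuousOn.intervalIntegrable ?_
    rw [uIcc_of_le hab]
    exact hf'c.div (hfc.pow 2) fun x hx => pow_ne_zero 2 (hne x hx)

theorem integral_eq_of_hasDerivAt_smul_add [CompleteSpace E] {K Z R : ℝ → E} {φ φ' : ℝ → ℝ}
    (hab : a ≤ b) (hφ : ∀ x ∈ Icc a b, HasDerivAt φ (φ' x) x) (hφ'c : ContinuousOn φ' (Icc a b))
    (hne : ∀ x ∈ Icc a b, φ x ≠ 0) (hZ : ∀ x ∈ Icc a b, HasDerivAt Z (φ x • K x + R x) x)
    (hK : ContinuousOn K (Icc a b)) (hR : ContinuousOn R (Icc a b)) :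
    ∫ x in a..b, K x = (φ b)⁻¹ • Z b - (φ a)⁻¹ • Z a
      + (∫ x in a..b, (φ' x / φ x ^ 2) • Z x) - ∫ x in a..b, (φ x)⁻¹ • R x := by
  have hφc : ContinuousOn φ (Icc a b) := HasDerivAt.continuousOn hφ
  have hinv : ∀ x ∈ Icc a b, HasDerivAt (fun x => (φ x)⁻¹) (-(φ' x / φ x ^ 2)) x := fun x hx =>
    ((hφ x hx).inv (hne x hx)).congr_deriv (neg_div _ _)
  have hinvc : ContinuousOn (fun x => (φ x)⁻¹) (Icc a b) := hφc.inv₀ hne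
  have hinv'c : ContinuousOn (fun x => φ' x / φ x ^ 2) (Icc a b) :=
    hφ'c.div (hφc.pow 2) fun x hx => pow_ne_zero 2 (hne x hx)
  have hZ'c : ContinuousOn (fun x => φ x • K x + R x) (Icc a b) := (hφc.smul hK).add hR
  have h := intervalIntegral.integral_smul_deriv_eq_deriv_smul (u := fun x => (φ x)⁻¹)
    (u' := fun x => -(φ' x / φ x ^ 2)) (by rwa [uIcc_of_le hab]) (by rwa [uIcc_of_le hab])
    (hinv'c.neg.intervalIntegrable_of_Icc hab) (hZ'c.intervalIntegrable_of_Icc hab)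
  simp only [neg_smul, intervalIntegral.integral_neg, sub_neg_eq_add] at h
  rw [← h, ← intervalIntegral.integral_sub (f := fun x => (φ x)⁻¹ • (φ x • K x + R x))
    (g := fun x => (φ x)⁻¹ • R x) ((hinvc.smul hZ'c).intervalIntegrable_of_Icc hab)
    ((hinvc.smul hR).intervalIntegrable_of_Icc hab)]
  refine intervalIntegral.integral_congr fun x hx => ?_
  rw [uIcc_of_le hab] at hx
  simp only [smul_add, inv_smul_smul₀ (hne x hx), add_sub_cancel_right]

theorem norm_integral_le_of_hasDerivAt_smul_add [CompleteSpace E] {K Z R : ℝ → E}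
    {φ φ' : ℝ → ℝ} {μ M M' : ℝ} (hab : a ≤ b) (hφ : ∀ x ∈ Icc a b, HasDerivAt φ (φ' x) x)
    (hφ'c : ContinuousOn φ' (Icc a b)) (hφ' : ∀ x ∈ Icc a b, 0 ≤ φ' x) (hμ : 0 < μ)
    (hφμ : ∀ x ∈ Icc a b, μ ≤ |φ x|)
    (hZ : ∀ x ∈ Icc a b, HasDerivAt Z (φ x • K x + R x) x)
    (hK : ContinuousOn K (Icc a b)) (hR : ContinuousOn R (Icc a b))
    (hZM : ∀ x ∈ Icc a b, ‖Z x‖ ≤ M) (hRM : ∀ x ∈ Icc a b, ‖R x‖ ≤ M') :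
    ‖∫ x in a..b, K x‖ ≤ (4 * M + M' * (b - a)) / μ := by
  have ha := left_mem_Icc.2 hab
  have hb := right_mem_Icc.2 hab
  have hne : ∀ x ∈ Icc a b, φ x ≠ 0 := fun x hx => abs_pos.1 (hμ.trans_le (hφμ x hx))
  have hsmul : ∀ x ∈ Icc a b, ∀ e : E, ∀ m : ℝ, ‖e‖ ≤ m → ‖(φ x)⁻¹ • e‖ ≤ m / μ := by
    intro x hx e m he
    rw [norm_smul, norm_inv, norm_eq_abs, inv_mul_eq_div]
    exact div_le_div₀ ((norm_nonneg _).trans he) he hμ (hφμ x hx)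
  have bulk : ‖∫ x in a..b, (φ' x / φ x ^ 2) • Z x‖ ≤ 2 / μ * M := by
    have hcont : ContinuousOn (fun x => φ' x / φ x ^ 2 * M) (Icc a b) :=
      (hφ'c.div ((HasDerivAt.continuousOn hφ).pow 2) fun x hx => pow_ne_zero 2 (hne x hx)).mul
        continuousOn_const
    refine (intervalIntegral.norm_integral_le_of_norm_le hab (Eventually.of_forall fun x hx => ?_)
      (hcont.intervalIntegrable_of_Icc hab)).trans ?_
    · have hx' := Ioc_subset_Icc_self hx
      rw [norm_smul, norm_of_nonneg (div_nonneg (hφ' x hx') (sq_nonneg _))]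
      exact mul_le_mul_of_nonneg_left (hZM x hx') (div_nonneg (hφ' x hx') (sq_nonneg _))
    · rw [intervalIntegral.integral_mul_const]
      exact mul_le_mul_of_nonneg_right (integral_deriv_div_sq_le hab hφ hφ'c hμ hφμ)
        ((norm_nonneg _).trans (hZM a ha))
  have error : ‖∫ x in a..b, (φ x)⁻¹ • R x‖ ≤ M' / μ * (b - a) := by
    have h := intervalIntegral.norm_integral_le_of_norm_le_const (a := a) (b := b) fun x hx =>
      hsmul x (Ioc_subset_Icc_self (uIoc_of_le hab ▸ hx)) _ _
        (hRM x (Ioc_subset_Icc_self (uIoc_of_le hab ▸ hx)))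
    rwa [abs_of_nonneg (sub_nonneg.2 hab)] at h
  rw [integral_eq_of_hasDerivAt_smul_add hab hφ hφ'c hne hZ hK hR]
  calc _ ≤ _ := norm_sub_le _ _
    _ ≤ _ := add_le_add_left ((norm_add_le _ _).trans (add_le_add_left (norm_sub_le _ _) _)) _
    _ ≤ (M / μ + M / μ + 2 / μ * M) + M' / μ * (b - a) := by
        gcongr
        exacts [hsmul b hb _ _ (hZM b hb), hsmul a ha _ _ (hZM a ha)]
    _ = _ := by ring

theorem forall_le_or_forall_le_neg_of_le_abs (hf : ContinuousOn f (Icc a b)) (hl : 0 < l)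
    (hlf : ∀ x ∈ Icc a b, l ≤ |f x|) :
    (∀ x ∈ Icc a b, l ≤ f x) ∨ ∀ x ∈ Icc a b, l ≤ -f x := by
  by_contra! ⟨⟨x, hx, hfx⟩, ⟨y, hy, hfy⟩⟩
  have hfx' : f x ≤ 0 := by grind
  have hfy' : 0 ≤ f y := by grind
  obtain ⟨z, hz, hfz⟩ := isPreconnected_Icc.intermediate_value hx hy hf ⟨hfx', hfy'⟩
  exact (hlf z hz).not_gt (by rwa [hfz, abs_zero])

theorem exists_forall_mul_abs_sub_le_abs (hab : a ≤ b) (hl : 0 < l)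
    (hf : ∀ x ∈ Icc a b, HasDerivAt f (f' x) x) (hf'c : ContinuousOn f' (Icc a b))
    (hlf' : ∀ x ∈ Icc a b, l ≤ |f' x|) :
    ∃ c, ∀ x ∈ Icc a b, l * |x - c| ≤ |f x| := by
  wlog hpos : ∀ x ∈ Icc a b, l ≤ f' x generalizing f f'
  · have hneg := (forall_le_or_forall_le_neg_of_le_abs hf'c hl hlf').resolve_left hpos
    simpa only [Pi.neg_apply, abs_neg] using this (fun x hx => (hf x hx).neg) hf'c.neg
      (fun x hx => (hlf' x hx).trans_eq (abs_neg _).symm) hneg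
  have hfc : ContinuousOn f (Icc a b) := HasDerivAt.continuousOn hf
  have growth : ∀ x ∈ Icc a b, ∀ y ∈ Icc a b, x ≤ y → l * (y - x) ≤ f y - f x :=
    (convex_Icc a b).mul_sub_le_image_sub_of_le_deriv hfc
      (fun x hx => (hf x (interior_subset hx)).differentiableAt.differentiableWithinAt)
      fun x hx => (hf x (interior_subset hx)).deriv ▸ hpos x (interior_subset hx)
  have ha := left_mem_Icc.2 hab
  have hb := right_mem_Icc.2 hab
  rcases le_total 0 (f a) with hfa | hfa
  · refine ⟨a, fun x hx => ?_⟩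
    rw [abs_of_nonneg (sub_nonneg.2 hx.1)]
    linarith [growth a ha x hx hx.1, le_abs_self (f x)]
  rcases le_total (f b) 0 with hfb | hfb
  · refine ⟨b, fun x hx => ?_⟩
    rw [abs_sub_comm, abs_of_nonneg (sub_nonneg.2 hx.2)]
    linarith [growth x hx b hb hx.2, neg_abs_le (f x)]
  obtain ⟨c, hc, hfc0⟩ := intermediate_value_Icc hab hfc ⟨hfa, hfb⟩
  refine ⟨c, fun x hx => ?_⟩
  rcases le_total x c with hxc | hxc
  · rw [abs_sub_comm, abs_of_nonneg (sub_nonneg.2 hxc)]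
    linarith [growth x hx c hc hxc, neg_abs_le (f x)]
  · rw [abs_of_nonneg (sub_nonneg.2 hxc)]
    linarith [growth c hc x hx hxc, le_abs_self (f x)]

theorem norm_cexp_I_mul_ofReal (t : ℝ) : ‖Complex.exp (Complex.I * t)‖ = 1 := by
  rw [mul_comm, Complex.norm_exp_ofReal_mul_I]

theorem continuousOn_cexp_I_mul_ofReal {X : Type*} [TopologicalSpace X] {s : Set X} {f : X → ℝ}
    (hf : ContinuousOn f s) : ContinuousOn (fun x => Complex.exp (Complex.I * f x)) s :=
  (continuousOn_const.mul (Complex.continuous_ofReal.comp_continuousOn hf)).cexp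

theorem norm_integral_cexp_le_of_le_abs_deriv {f'' : ℝ → ℝ} {μ : ℝ} (hab : a ≤ b)
    (hf : ∀ x ∈ Icc a b, HasDerivAt f (f' x) x) (hf' : ∀ x ∈ Icc a b, HasDerivAt f' (f'' x) x)
    (hf''c : ContinuousOn f'' (Icc a b))
    (hf'' : (∀ x ∈ Icc a b, 0 ≤ f'' x) ∨ ∀ x ∈ Icc a b, 0 ≤ -f'' x)
    (hμ : 0 < μ) (hμf' : ∀ x ∈ Icc a b, μ ≤ |f' x|) :
    ‖∫ x in a..b, Complex.exp (Complex.I * f x)‖ ≤ 4 / μ := by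
  have hexp := continuousOn_cexp_I_mul_ofReal (HasDerivAt.continuousOn hf)
  have hZ : ∀ x ∈ Icc a b, HasDerivAt (fun x => Complex.exp (Complex.I * f x))
      (f' x • (Complex.I * Complex.exp (Complex.I * f x))) x := fun x hx =>
    ((hf x hx).ofReal_comp.const_mul Complex.I).cexp.congr_deriv (by rw [Complex.real_smul]; ring)
  have parts := fun φ φ' hφ hφ'c hφ' hφμ ε hZ => norm_integral_le_of_hasDerivAt_smul_add
    (φ := φ) (φ' := φ') (K := fun x => (ε : ℂ) * (Complex.I * Complex.exp (Complex.I * f x)))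
    (R := fun _ => 0) (M' := 0) hab hφ hφ'c hφ' hμ hφμ hZ
    (continuousOn_const.mul (continuousOn_const.mul hexp)) continuousOn_const
    (fun x _ => (norm_cexp_I_mul_ofReal (f x)).le) (fun _ _ => norm_zero.le)
  simp only [intervalIntegral.integral_const_mul, norm_mul, Complex.norm_I, one_mul, zero_mul,
    add_zero, mul_one] at parts
  rcases hf'' with hpos | hneg
  · simpa using parts f' f'' hf' hf''c hpos hμf' 1 (by simpa using hZ)
  · simpa using parts (-f') (-f'') (fun x hx => (hf' x hx).neg) hf''c.neg hneg
      (by simpa using hμf') (-1) (by simpa using hZ)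

theorem norm_integral_cexp_le_of_forall_mul_le_abs {g g' : ℝ → ℝ} {C : ℝ} (hab : a ≤ b)
    (hl : 0 < l) (hδ : 0 ≤ δ) (hC : 0 ≤ C) (hf : ContinuousOn f (Icc a b))
    (hg : ∀ x ∈ Icc a b, HasDerivAt g (g' x) x) (hg'c : ContinuousOn g' (Icc a b))
    (hlg' : ∀ x ∈ Icc a b, l ≤ |g' x|)
    (h : ∀ p q, p ≤ q → Icc p q ⊆ Icc a b → (∀ x ∈ Icc p q, l * δ ≤ |g x|) →
      ‖∫ x in p..q, Complex.exp (Complex.I * f x)‖ ≤ C * δ) :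
    ‖∫ x in a..b, Complex.exp (Complex.I * f x)‖ ≤ (2 + 2 * C) * δ := by
  obtain ⟨c, hc⟩ := exists_forall_mul_abs_sub_le_abs hab hl hg hg'c hlg'
  refine (norm_integral_le_of_forall_away hab hδ (continuousOn_cexp_I_mul_ofReal hf)
    (fun x _ => (norm_cexp_I_mul_ofReal _).le) (by positivity) fun p q hpq hsub hx =>
      h p q hpq hsub fun x hx' =>
        (mul_le_mul_of_nonneg_left (hx x hx') hl.le).trans (hc x (hsub hx'))).trans_eq ?_
  ring

theorem norm_integral_cexp_le_rpow_neg_half {f'' : ℝ → ℝ} (hab : a ≤ b) (hl : 0 < l)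
    (hf : ∀ x ∈ Icc a b, HasDerivAt f (f' x) x) (hf' : ∀ x ∈ Icc a b, HasDerivAt f' (f'' x) x)
    (hf''c : ContinuousOn f'' (Icc a b)) (hlf'' : ∀ x ∈ Icc a b, l ≤ |f'' x|) :
    ‖∫ x in a..b, Complex.exp (Complex.I * f x)‖ ≤ 10 * l ^ (-1 / 2 : ℝ) := by
  set δ := l ^ (-1 / 2 : ℝ) with hδ
  have hδ0 : 0 < δ := rpow_pos_of_pos hl _
  have hlδ : l * δ * δ = 1 := by
    rw [hδ, mul_assoc, ← rpow_add hl]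
    norm_num [rpow_neg_one, hl.ne']
  refine (norm_integral_cexp_le_of_forall_mul_le_abs (C := 4) hab hl hδ0.le (by norm_num)
    (HasDerivAt.continuousOn hf) hf' hf''c hlf'' fun p q hpq hsub hx => ?_).trans_eq (by ring)
  have h := norm_integral_cexp_le_of_le_abs_deriv hpq (fun x hx => hf x (hsub hx))
    (fun x hx => hf' x (hsub hx)) (hf''c.mono hsub)
    ((forall_le_or_forall_le_neg_of_le_abs hf''c hl hlf'').imp
      (fun h x hx => hl.le.trans (h x (hsub hx))) fun h x hx => hl.le.trans (h x (hsub hx)))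
    (mul_pos hl hδ0) hx
  rwa [show 4 / (l * δ) = 4 * δ by field_simp; linear_combination -hlδ] at h

theorem exists_norm_integral_cexp_le_rpow (k : ℕ) : ∃ C > 0,
    ∀ (F : ℕ → ℝ → ℝ) (a b l : ℝ), a ≤ b → 0 < l →
      (∀ i < k + 2, ∀ x ∈ Icc a b, HasDerivAt (F i) (F (i + 1) x) x) →
      ContinuousOn (F (k + 2)) (Icc a b) → (∀ x ∈ Icc a b, l ≤ |F (k + 2) x|) →
      ‖∫ x in a..b, Complex.exp (Complex.I * F 0 x)‖ ≤ C * l ^ (-1 / (k + 2) : ℝ) := by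
  induction k with
  | zero =>
    refine ⟨10, by norm_num, fun F a b l hab hl hF hFc hlF => ?_⟩
    rw [Nat.cast_zero, zero_add]
    exact norm_integral_cexp_le_rpow_neg_half hab hl (hF 0 (by norm_num)) (hF 1 (by norm_num))
      hFc hlF
  | succ k ih =>
    obtain ⟨C, hC, ih⟩ := ih
    refine ⟨2 + 2 * C, by positivity, fun F a b l hab hl hF hFc hlF => ?_⟩
    rw [Nat.cast_add_one, show (k + 1 + 2 : ℝ) = k + 3 by ring]
    set δ := l ^ (-1 / (k + 3) : ℝ) with hδ
    have hδ0 : 0 < δ := rpow_pos_of_pos hl _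
    have hlδ : (l * δ) ^ (-1 / (k + 2) : ℝ) = δ := by
      rw [hδ, mul_comm, ← rpow_add_one hl.ne', ← rpow_mul hl.le]
      congr 1
      field_simp
      ring
    refine norm_integral_cexp_le_of_forall_mul_le_abs hab hl hδ0.le hC.le
      (HasDerivAt.continuousOn (hF 0 (by omega))) (hF (k + 2) (by omega)) hFc hlF
      fun p q hpq hsub hx => ?_
    have h := ih F p q (l * δ) hpq (mul_pos hl hδ0) (fun i hi x hx => hF i (by omega) x (hsub hx))
      ((HasDerivAt.continuousOn (hF (k + 2) (by omega))).mono hsub) hx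
    rwa [hlδ] at h

-- Summation by parts: `g` enters only through its primitive.
theorem norm_integral_mul_le_of_forall_norm_integral_le {g A A' : ℝ → ℂ} {B M M' : ℝ} (hab : a ≤ b)
    (hg : ContinuousOn g (Icc a b)) (hB : ∀ x ∈ Icc a b, ‖∫ t in a..x, g t‖ ≤ B)
    (hA : ∀ x ∈ Icc a b, HasDerivAt A (A' x) x) (hA'c : ContinuousOn A' (Icc a b))
    (hAM : ∀ x ∈ Icc a b, ‖A x‖ ≤ M) (hA'M : ∀ x ∈ Icc a b, ‖A' x‖ ≤ M') :
    ‖∫ x in a..b, g x * A x‖ ≤ B * (M + M' * (b - a)) := by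
  set G : ℝ → ℂ := fun x => ∫ t in a..x, g t
  have hB0 : 0 ≤ B := (norm_nonneg _).trans (hB a (left_mem_Icc.2 hab))
  have hAc : ContinuousOn A (Icc a b) := HasDerivAt.continuousOn hA
  have hGc : ContinuousOn G (uIcc a b) := intervalIntegral.continuousOn_primitive_interval
    (by rw [uIcc_of_le hab]; exact hg.integrableOn_Icc)
  have hG' : ∀ x ∈ Ioo (min a b) (max a b), HasDerivWithinAt G (g x) (Ioi x) x := fun x hx => by
    rw [min_eq_left hab, max_eq_right hab] at hx
    refine (intervalIntegral.integral_hasDerivAt_right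
      ((hg.mono (Icc_subset_Icc_right hx.2.le)).intervalIntegrable_of_Icc hx.1.le)
      ((hg.mono Ioo_subset_Icc_self).stronglyMeasurableAtFilter isOpen_Ioo x hx)
      (hg.continuousAt (Icc_mem_nhds hx.1 hx.2))).hasDerivWithinAt
  have parts : ∫ x in a..b, g x * A x = G b * A b - ∫ x in a..b, G x * A' x := by
    have h := intervalIntegral.integral_deriv_mul_eq_sub_of_hasDeriv_right hGc
      (by rwa [uIcc_of_le hab]) hG'
      (fun x hx => (hA x (by rw [← uIcc_of_le hab]; exact Ioo_subset_Icc_self hx)).hasDerivWithinAt)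
      (hg.intervalIntegrable_of_Icc hab) (hA'c.intervalIntegrable_of_Icc hab)
    rw [intervalIntegral.integral_add (f := fun x => g x * A x) (g := fun x => G x * A' x)
      ((hg.mul hAc).intervalIntegrable_of_Icc hab)
      (((uIcc_of_le hab ▸ hGc).mul hA'c).intervalIntegrable_of_Icc hab),
      show G a = 0 from intervalIntegral.integral_same, zero_mul, sub_zero] at h
    exact eq_sub_of_add_eq h
  have boundary : ‖G b * A b‖ ≤ B * M := by
    rw [norm_mul]
    exact mul_le_mul (hB b (right_mem_Icc.2 hab)) (hAM b (right_mem_Icc.2 hab)) (norm_nonneg _) hB0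
  have bulk : ‖∫ x in a..b, G x * A' x‖ ≤ B * M' * (b - a) := by
    have h := intervalIntegral.norm_integral_le_of_norm_le_const (a := a) (b := b) (C := B * M')
      (f := fun x => G x * A' x) fun x hx => by
        have hx' := Ioc_subset_Icc_self (uIoc_of_le hab ▸ hx)
        rw [norm_mul]
        exact mul_le_mul (hB x hx') (hA'M x hx') (norm_nonneg _) hB0
    rwa [abs_of_nonneg (sub_nonneg.2 hab)] at h
  rw [parts]
  linarith [norm_sub_le (G b * A b) (∫ x in a..b, G x * A' x)]

theorem exists_norm_integral_cexp_mul_le_rpow (k : ℕ) : ∃ C > 0,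
    ∀ (F : ℕ → ℝ → ℝ) (A A' : ℝ → ℂ) (a b l M M' : ℝ), a ≤ b → 0 < l →
      (∀ i < k + 2, ∀ x ∈ Icc a b, HasDerivAt (F i) (F (i + 1) x) x) →
      ContinuousOn (F (k + 2)) (Icc a b) → (∀ x ∈ Icc a b, l ≤ |F (k + 2) x|) →
      (∀ x ∈ Icc a b, HasDerivAt A (A' x) x) → ContinuousOn A' (Icc a b) →
      (∀ x ∈ Icc a b, ‖A x‖ ≤ M) → (∀ x ∈ Icc a b, ‖A' x‖ ≤ M') →
      ‖∫ x in a..b, Complex.exp (Complex.I * F 0 x) * A x‖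
        ≤ C * l ^ (-1 / (k + 2) : ℝ) * (M + M' * (b - a)) := by
  obtain ⟨C, hC, vanDerCorput⟩ := exists_norm_integral_cexp_le_rpow k
  refine ⟨C, hC, fun F A A' a b l M M' hab hl hF hFc hlF hA hA'c hAM hA'M => ?_⟩
  refine norm_integral_mul_le_of_forall_norm_integral_le hab
    (continuousOn_cexp_I_mul_ofReal (HasDerivAt.continuousOn (hF 0 (by omega))))
    (fun x hx => ?_) hA hA'c hAM hA'M
  have hsub : Icc a x ⊆ Icc a b := Icc_subset_Icc_right hx.2
  exact vanDerCorput F a x l hx.1 hl (fun i hi t ht => hF i hi t (hsub ht)) (hFc.mono hsub)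
    fun t ht => hlF t (hsub ht)

theorem norm_integral_le_rpow_neg_half [CompleteSpace E] {K Z R : ℝ → E} {τ M M' : ℝ} (hab : a ≤ b)
    (hτ : 0 < τ) (hZ : ∀ x ∈ Icc a b, HasDerivAt Z ((τ * (x - c)) • K x + R x) x)
    (hK : ContinuousOn K (Icc a b)) (hR : ContinuousOn R (Icc a b))
    (hKM : ∀ x ∈ Icc a b, ‖K x‖ ≤ M) (hZM : ∀ x ∈ Icc a b, ‖Z x‖ ≤ M)
    (hRM : ∀ x ∈ Icc a b, ‖R x‖ ≤ M') :
    ‖∫ x in a..b, K x‖ ≤ (10 * M + 2 * M' * (b - a)) * τ ^ (-1 / 2 : ℝ) := by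
  have hM : 0 ≤ M := (norm_nonneg _).trans (hZM a (left_mem_Icc.2 hab))
  have hM' : 0 ≤ M' := (norm_nonneg _).trans (hRM a (left_mem_Icc.2 hab))
  set δ := τ ^ (-1 / 2 : ℝ) with hδ
  have hδ0 : 0 < δ := rpow_pos_of_pos hτ _
  have hτδ : τ * δ * δ = 1 := by
    rw [hδ, mul_assoc, ← rpow_add hτ]
    norm_num [rpow_neg_one, hτ.ne']
  have away : ∀ p q, p ≤ q → Icc p q ⊆ Icc a b → (∀ x ∈ Icc p q, δ ≤ |x - c|) →
      ‖∫ x in p..q, K x‖ ≤ (4 * M + M' * (b - a)) * δ := fun p q hpq hsub hx => by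
    have h := norm_integral_le_of_hasDerivAt_smul_add (φ := fun x => τ * (x - c)) hpq
      (fun x _ => ((hasDerivAt_id x).sub_const c).const_mul τ) continuousOn_const
      (fun _ _ => by positivity) (mul_pos hτ hδ0)
      (fun x hx' => by
        rw [abs_mul, abs_of_pos hτ]
        exact mul_le_mul_of_nonneg_left (hx x hx') hτ.le)
      (fun x hx => hZ x (hsub hx)) (hK.mono hsub) (hR.mono hsub) (fun x hx => hZM x (hsub hx))
      fun x hx => hRM x (hsub hx)
    rw [div_eq_mul_inv, ← eq_inv_of_mul_eq_one_right hτδ] at h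
    have hlen : q - p ≤ b - a := sub_le_sub (hsub (right_mem_Icc.2 hpq)).2
      (hsub (left_mem_Icc.2 hpq)).1
    exact h.trans (by gcongr)
  refine (norm_integral_le_of_forall_away hab hδ0.le hK hKM
    (by have := sub_nonneg.2 hab; positivity) away).trans_eq (by ring)

end OneVariable

/-! ### The partial Legendre transform -/

/-- The derivative of `f` in the direction `e`, as a function of the base point so that it can be
iterated. -/
noncomputable def dirDeriv {E : Type*} [NormedAddCommGroup E] [NormedSpace ℝ E] (e : E) (f : E → ℝ)
    (p : E) : ℝ := fderiv ℝ f p e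

local notation "∂x" => dirDeriv ((0, 1, 0) : _ × ℝ × ℝ)
local notation "∂y" => dirDeriv ((0, 0, 1) : _ × ℝ × ℝ)

section Legendre

variable {E : Type*} [NormedAddCommGroup E] [NormedSpace ℝ E]

theorem differentiableAt_of_contDiffOn {f : E → ℝ} {V : Set E} {p : E} (hV : IsOpen V)
    (hf : ContDiffOn ℝ ∞ f V) (hp : p ∈ V) : DifferentiableAt ℝ f p :=
  (hf.contDiffAt (hV.mem_nhds hp)).differentiableAt (by simp)

theorem contDiffOn_dirDeriv {f : E → ℝ} {V : Set E} (e : E) (hV : IsOpen V)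
    (hf : ContDiffOn ℝ ∞ f V) : ContDiffOn ℝ ∞ (dirDeriv e f) V :=
  (hf.fderiv_of_isOpen hV (m := ∞) (by simp)).clm_apply contDiffOn_const

theorem contDiffOn_iterate_dirDeriv {f : E → ℝ} {V : Set E} (e : E) (hV : IsOpen V)
    (hf : ContDiffOn ℝ ∞ f V) (i : ℕ) : ContDiffOn ℝ ∞ ((dirDeriv e)^[i] f) V :=
  Function.Iterate.rec (fun g => ContDiffOn ℝ ∞ g V) hf (fun _ => contDiffOn_dirDeriv e hV) i

theorem dirDeriv_congr {f g : E → ℝ} {V : Set E} {p : E} (e : E) (hV : IsOpen V) (h : EqOn f g V)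
    (hp : p ∈ V) : dirDeriv e f p = dirDeriv e g p := by
  rw [dirDeriv, dirDeriv, (h.eventuallyEq_of_mem (hV.mem_nhds hp)).fderiv_eq]

theorem dirDeriv_neg (e : E) (f : E → ℝ) (p : E) :
    dirDeriv e (fun p => -f p) p = -dirDeriv e f p := by
  rw [dirDeriv, fderiv_fun_neg, neg_apply, dirDeriv]

section

variable {e p : E} {f g : E → ℝ}

theorem dirDeriv_const (c : ℝ) : dirDeriv e (fun _ => c) p = 0 := by
  rw [dirDeriv, fderiv_fun_const, Pi.zero_apply, zero_apply]

theorem dirDeriv_add (hf : DifferentiableAt ℝ f p) (hg : DifferentiableAt ℝ g p) :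
    dirDeriv e (fun q => f q + g q) p = dirDeriv e f p + dirDeriv e g p := by
  simp only [dirDeriv, fderiv_fun_add hf hg, add_apply]

theorem dirDeriv_mul (hf : DifferentiableAt ℝ f p) (hg : DifferentiableAt ℝ g p) :
    dirDeriv e (fun q => f q * g q) p = dirDeriv e f p * g p + f p * dirDeriv e g p := by
  simp only [dirDeriv, fderiv_fun_mul hf hg, add_apply, smul_apply, smul_eq_mul]
  ring

theorem dirDeriv_pow (hf : DifferentiableAt ℝ f p) (k : ℕ) :
    dirDeriv e (fun q => f q ^ k) p = k * f p ^ (k - 1) * dirDeriv e f p := by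
  simp [dirDeriv, fderiv_fun_pow k hf]

theorem dirDeriv_rpow_const (hf : DifferentiableAt ℝ f p) (hfp : f p ≠ 0) (a : ℝ) :
    dirDeriv e (fun q => f q ^ a) p = a * f p ^ (a - 1) * dirDeriv e f p := by
  simp [dirDeriv, (hf.hasFDerivAt.rpow_const (.inl hfp)).fderiv]

end

variable {P : Type*} [NormedAddCommGroup P] [NormedSpace ℝ P]

theorem hasDerivAt_dirDeriv_fst {f : P × ℝ × ℝ → ℝ} {n : P} {x y : ℝ}
    (hf : DifferentiableAt ℝ f (n, x, y)) :
    HasDerivAt (fun x => f (n, x, y)) (∂x f (n, x, y)) x :=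
  hf.hasFDerivAt.comp_hasDerivAt x
    ((hasDerivAt_const x n).prodMk ((hasDerivAt_id x).prodMk (hasDerivAt_const x y)))

theorem hasDerivAt_dirDeriv_snd {f : P × ℝ × ℝ → ℝ} {n : P} {x y : ℝ}
    (hf : DifferentiableAt ℝ f (n, x, y)) :
    HasDerivAt (fun y => f (n, x, y)) (∂y f (n, x, y)) y :=
  hf.hasFDerivAt.comp_hasDerivAt y
    ((hasDerivAt_const y n).prodMk ((hasDerivAt_const y x).prodMk (hasDerivAt_id y)))

theorem dirDeriv_eq_add (f : P × ℝ × ℝ → ℝ) (p : P × ℝ × ℝ) (s t : ℝ) :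
    dirDeriv (0, s, t) f p = s * ∂x f p + t * ∂y f p := by
  simp only [dirDeriv, ← smul_eq_mul, ← map_smul, ← map_add]
  simp

theorem dirDeriv_eq_of_hasDerivAt {f : P × ℝ × ℝ → ℝ} {p : P × ℝ × ℝ} {d₁ d₂ : ℝ}
    (hf : DifferentiableAt ℝ f p)
    (h₁ : HasDerivAt (fun x => f (p.1, x, p.2.2)) d₁ p.2.1)
    (h₂ : HasDerivAt (fun y => f (p.1, p.2.1, y)) d₂ p.2.2) (u v : ℝ) :
    dirDeriv (0, u, v) f p = u * d₁ + v * d₂ := by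
  rw [dirDeriv_eq_add, (hasDerivAt_dirDeriv_fst hf).unique h₁,
    (hasDerivAt_dirDeriv_snd hf).unique h₂]

theorem dirDeriv_comp_equiv {F : Type*} [NormedAddCommGroup F] [NormedSpace ℝ F] (e : E ≃L[ℝ] F)
    (f : P × F → ℝ) (w : E) :
    dirDeriv (0, w) (fun p => f (p.1, e p.2)) = fun p => dirDeriv (0, e w) f (p.1, e p.2) := by
  funext p
  simpa [dirDeriv, Function.comp_def] using congrArg (fun L : P × E →L[ℝ] ℝ => L (0, w))
    (((ContinuousLinearEquiv.refl ℝ P).prodCongr e).comp_right_fderiv (f := f) (x := p))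

/-- The map of `P × ℝ × ℝ` replacing the middle coordinate by the value of `X`. -/
def fibreMap (X : P × ℝ × ℝ → ℝ) (q : P × ℝ × ℝ) : P × ℝ × ℝ := (q.1, X q, q.2.2)

/-- `fibreMap L` as a continuous linear map. -/
noncomputable def fibreMapL (L : P × ℝ × ℝ →L[ℝ] ℝ) : P × ℝ × ℝ →L[ℝ] P × ℝ × ℝ :=
  (ContinuousLinearMap.fst ℝ P (ℝ × ℝ)).prod (L.prod
    ((ContinuousLinearMap.snd ℝ ℝ ℝ).comp (ContinuousLinearMap.snd ℝ P (ℝ × ℝ))))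

theorem contDiffOn_fibreMap {X : P × ℝ × ℝ → ℝ} {V : Set (P × ℝ × ℝ)} (hX : ContDiffOn ℝ ∞ X V) :
    ContDiffOn ℝ ∞ (fibreMap X) V :=
  contDiffOn_fst.prodMk (hX.prodMk contDiffOn_snd.snd)

theorem hasFDerivAt_fibreMap {X : P × ℝ × ℝ → ℝ} {X' : P × ℝ × ℝ →L[ℝ] ℝ} {q : P × ℝ × ℝ}
    (hX : HasFDerivAt X X' q) :
    HasFDerivAt (fibreMap X) (fibreMapL X') q :=
  hasFDerivAt_fst.prodMk (hX.prodMk hasFDerivAt_snd.snd)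

theorem dirDeriv_comp_fibreMap {f X : P × ℝ × ℝ → ℝ} {q : P × ℝ × ℝ} (s t : ℝ)
    (hf : DifferentiableAt ℝ f (fibreMap X q)) (hX : DifferentiableAt ℝ X q) :
    dirDeriv (0, s, t) (fun q => f (fibreMap X q)) q
      = dirDeriv (0, s, t) X q * ∂x f (fibreMap X q) + t * ∂y f (fibreMap X q) :=
  (congrArg (· (0, s, t))
    (hf.hasFDerivAt.comp q (hasFDerivAt_fibreMap hX.hasFDerivAt)).fderiv).trans
    (dirDeriv_eq_add f _ _ _)

/-- The slope `dx/dy` of the level curves of `∂x W` in the `(x, y)`-fibres. -/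
noncomputable def levelSlope (W : P × ℝ × ℝ → ℝ) (p : P × ℝ × ℝ) : ℝ := -∂y (∂x W) p / ∂x (∂x W) p

/-- The derivative of `f` along the level curves of `∂x W`, parametrised by `y`. -/
noncomputable def levelDeriv (W f : P × ℝ × ℝ → ℝ) (p : P × ℝ × ℝ) : ℝ :=
  ∂y f p + levelSlope W p * ∂x f p

theorem levelDeriv_eq_dirDeriv (W f : P × ℝ × ℝ → ℝ) (p : P × ℝ × ℝ) :
    levelDeriv W f p = dirDeriv (0, levelSlope W p, 1) f p := by
  rw [levelDeriv, dirDeriv_eq_add f p (levelSlope W p) 1]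
  ring

theorem contDiffOn_levelDeriv {W f : P × ℝ × ℝ → ℝ} {O : Set (P × ℝ × ℝ)} (hO : IsOpen O)
    (hW : ContDiffOn ℝ ∞ W O) (hxx : ∀ p ∈ O, ∂x (∂x W) p ≠ 0) (hf : ContDiffOn ℝ ∞ f O) :
    ContDiffOn ℝ ∞ (levelDeriv W f) O := by
  have hWx := contDiffOn_dirDeriv (0, 1, 0) hO hW
  exact (contDiffOn_dirDeriv _ hO hf).add
    (((contDiffOn_dirDeriv _ hO hWx).neg.div (contDiffOn_dirDeriv _ hO hWx) hxx).mul
      (contDiffOn_dirDeriv _ hO hf))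

/-- `X` inverts, in the middle coordinate, the map `(n, x, y) ↦ (n, ∂x W (n, x, y), y)` from `O`
onto `V`: the change of variables underlying the partial Legendre transform of `W` in `x`. -/
structure IsLegendreChart (W X : P × ℝ × ℝ → ℝ) (O V : Set (P × ℝ × ℝ)) : Prop where
  isOpen_source : IsOpen O
  isOpen_target : IsOpen V
  contDiffOn : ContDiffOn ℝ ∞ W O
  contDiffOn_inv : ContDiffOn ℝ ∞ X V
  ne_zero : ∀ p ∈ O, ∂x (∂x W) p ≠ 0
  mapsTo : MapsTo (fibreMap (∂x W)) O V
  mapsTo_inv : MapsTo (fibreMap X) V O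
  left_inv : ∀ p ∈ O, X (fibreMap (∂x W) p) = p.2.1
  right_inv : ∀ q ∈ V, ∂x W (fibreMap X q) = q.2.1

theorem exists_continuousLinearEquiv_eq_fibreMapL (L : P × ℝ × ℝ →L[ℝ] ℝ) (hL : L (0, 1, 0) ≠ 0) :
    ∃ e : (P × ℝ × ℝ) ≃L[ℝ] (P × ℝ × ℝ), (e : P × ℝ × ℝ →L[ℝ] P × ℝ × ℝ) = fibreMapL L := by
  have split : ∀ (n : P) (x y : ℝ), L (n, x, y) = x * L (0, 1, 0) + L (n, 0, y) := fun n x y => by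
    rw [← smul_eq_mul, ← map_smul, ← map_add]
    simp
  let fst : P × ℝ × ℝ →L[ℝ] ℝ :=
    (ContinuousLinearMap.fst ℝ ℝ ℝ).comp (ContinuousLinearMap.snd ℝ P (ℝ × ℝ))
  refine ⟨.equivOfInverse (fibreMapL L)
    (fibreMapL ((L (0, 1, 0))⁻¹ • (fst - L.comp (fibreMapL 0)))) ?_ ?_, ?_⟩
  · rintro ⟨n, x, y⟩
    refine Prod.ext rfl (Prod.ext ?_ rfl)
    change (L (0, 1, 0))⁻¹ * (L (n, x, y) - L (n, 0, y)) = x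
    rw [split n x, add_sub_cancel_right, mul_comm x, inv_mul_cancel_left₀ hL]
  · rintro ⟨n, x, y⟩
    refine Prod.ext rfl (Prod.ext ?_ rfl)
    change L (n, (L (0, 1, 0))⁻¹ * (x - L (n, 0, y)), y) = x
    rw [split, mul_right_comm, inv_mul_cancel₀ hL, one_mul, sub_add_cancel]
  · rfl

theorem isLegendreChart_of_openPartialHomeomorph {W : P × ℝ × ℝ → ℝ} {U : Set (P × ℝ × ℝ)}
    (Θ : OpenPartialHomeomorph (P × ℝ × ℝ) (P × ℝ × ℝ)) (hΘ : ⇑Θ = fibreMap (∂x W))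
    (hU : IsOpen U) (hW : ContDiffOn ℝ ∞ W U) (hne : ∀ p ∈ U, ∂x (∂x W) p ≠ 0)
    (hsymm : ∀ q ∈ Θ.target, Θ.symm q ∈ U → ContDiffAt ℝ ∞ Θ.symm q) :
    IsLegendreChart W (fun q => (Θ.symm q).2.1) (Θ.source ∩ U) (Θ.target ∩ Θ.symm ⁻¹' U) := by
  have right : ∀ q ∈ Θ.target, fibreMap (∂x W) (Θ.symm q) = q := fun q hq => by
    rw [← hΘ, Θ.right_inv hq]
  have symm_eq : ∀ q ∈ Θ.target, fibreMap (fun q => (Θ.symm q).2.1) q = Θ.symm q := fun q hq => by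
    conv_rhs => rw [← Prod.mk.eta (p := Θ.symm q), ← Prod.mk.eta (p := (Θ.symm q).2)]
    exact Prod.ext (congrArg Prod.fst (right q hq)).symm
      (Prod.ext rfl (congrArg (fun q => q.2.2) (right q hq)).symm)
  exact {
    isOpen_source := Θ.open_source.inter hU
    isOpen_target := Θ.isOpen_inter_preimage_symm hU
    contDiffOn := hW.mono inter_subset_right
    contDiffOn_inv := fun q hq => (hsymm q hq.1 hq.2).snd.fst.contDiffWithinAt
    ne_zero := fun p hp => hne p hp.2
    mapsTo := fun p hp => by
      rw [← hΘ]
      exact ⟨Θ.map_source hp.1, by rw [mem_preimage, Θ.left_inv hp.1]; exact hp.2⟩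
    mapsTo_inv := fun q hq => by
      rw [symm_eq q hq.1]
      exact ⟨Θ.map_target hq.1, hq.2⟩
    left_inv := fun p hp => by rw [← hΘ, Θ.left_inv hp.1]
    right_inv := fun q hq => by
      rw [symm_eq q hq.1]
      exact congrArg (fun q => q.2.1) (right q hq.1) }

theorem exists_isLegendreChart [CompleteSpace P] {W : P × ℝ × ℝ → ℝ} {U : Set (P × ℝ × ℝ)}
    {p₀ : P × ℝ × ℝ} (hU : IsOpen U) (hW : ContDiffOn ℝ ∞ W U) (hp₀ : p₀ ∈ U)
    (hne : ∂x (∂x W) p₀ ≠ 0) :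
    ∃ X O V, p₀ ∈ O ∧ O ⊆ U ∧ IsLegendreChart W X O V := by
  have hWx := contDiffOn_dirDeriv (0, 1, 0) hU hW
  have smooth : ∀ p ∈ U, ContDiffAt ℝ ∞ (fibreMap (∂x W)) p := fun p hp =>
    (contDiffOn_fibreMap hWx).contDiffAt (hU.mem_nhds hp)
  have deriv : ∀ p ∈ U, ∂x (∂x W) p ≠ 0 → ∃ e : (P × ℝ × ℝ) ≃L[ℝ] (P × ℝ × ℝ),
      HasFDerivAt (fibreMap (∂x W)) (e : P × ℝ × ℝ →L[ℝ] P × ℝ × ℝ) p := fun p hp hne => by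
    obtain ⟨e, he⟩ := exists_continuousLinearEquiv_eq_fibreMapL _ hne
    exact ⟨e, he ▸ hasFDerivAt_fibreMap (differentiableAt_of_contDiffOn hU hWx hp).hasFDerivAt⟩
  obtain ⟨e₀, he₀⟩ := deriv p₀ hp₀ hne
  let Θ := (smooth p₀ hp₀).toOpenPartialHomeomorph (fibreMap (∂x W)) he₀ (by simp)
  let U₁ := U ∩ ∂x (∂x W) ⁻¹' {0}ᶜ
  have hU₁ : IsOpen U₁ := (contDiffOn_dirDeriv (0, 1, 0) hU hWx).continuousOn.isOpen_inter_preimage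
    hU isOpen_compl_singleton
  refine ⟨fun q => (Θ.symm q).2.1, Θ.source ∩ U₁, Θ.target ∩ Θ.symm ⁻¹' U₁,
    ⟨ContDiffAt.mem_toOpenPartialHomeomorph_source _ he₀ (by simp), hp₀, hne⟩,
    fun p hp => hp.2.1, isLegendreChart_of_openPartialHomeomorph Θ rfl hU₁
      (hW.mono inter_subset_left) (fun p hp => hp.2) fun q hq hqU => ?_⟩
  obtain ⟨e, he⟩ := deriv _ hqU.1 hqU.2
  exact Θ.contDiffAt_symm hq he (smooth _ hqU.1)

/-- The partial Legendre transform of `W` in `x`, where `X` is the inverse of `x ↦ ∂x W`. -/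
def legendre (W X : P × ℝ × ℝ → ℝ) (q : P × ℝ × ℝ) : ℝ := q.2.1 * X q - W (fibreMap X q)

namespace IsLegendreChart

variable {W X : P × ℝ × ℝ → ℝ} {O V : Set (P × ℝ × ℝ)}

theorem differentiableAt_inv (h : IsLegendreChart W X O V) {q : P × ℝ × ℝ} (hq : q ∈ V) :
    DifferentiableAt ℝ X q :=
  differentiableAt_of_contDiffOn h.isOpen_target h.contDiffOn_inv hq

theorem dirDeriv_comp (h : IsLegendreChart W X O V) {f : P × ℝ × ℝ → ℝ} (hf : ContDiffOn ℝ ∞ f O)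
    (s t : ℝ) {q : P × ℝ × ℝ} (hq : q ∈ V) :
    dirDeriv (0, s, t) (fun q => f (fibreMap X q)) q
      = dirDeriv (0, s, t) X q * ∂x f (fibreMap X q) + t * ∂y f (fibreMap X q) :=
  dirDeriv_comp_fibreMap s t (differentiableAt_of_contDiffOn h.isOpen_source hf (h.mapsTo_inv hq))
    (h.differentiableAt_inv hq)

theorem dirDeriv_right_inv (h : IsLegendreChart W X O V) (s t : ℝ) {q : P × ℝ × ℝ} (hq : q ∈ V) :
    dirDeriv (0, s, t) X q * ∂x (∂x W) (fibreMap X q) + t * ∂y (∂x W) (fibreMap X q) = s := by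
  rw [← h.dirDeriv_comp (contDiffOn_dirDeriv _ h.isOpen_source h.contDiffOn) s t hq,
    dirDeriv_congr _ h.isOpen_target h.right_inv hq]
  have hfst : HasFDerivAt (fun q : P × ℝ × ℝ => q.2.1) _ q :=
    ((ContinuousLinearMap.fst ℝ ℝ ℝ).comp (ContinuousLinearMap.snd ℝ P (ℝ × ℝ))).hasFDerivAt
  exact congrArg (· (0, s, t)) hfst.fderiv

theorem dirDeriv_inv_fst (h : IsLegendreChart W X O V) {q : P × ℝ × ℝ} (hq : q ∈ V) :
    ∂x X q = (∂x (∂x W) (fibreMap X q))⁻¹ :=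
  eq_inv_of_mul_eq_one_left (by simpa using h.dirDeriv_right_inv 1 0 hq)

theorem dirDeriv_inv_snd (h : IsLegendreChart W X O V) {q : P × ℝ × ℝ} (hq : q ∈ V) :
    ∂y X q = levelSlope W (fibreMap X q) := by
  rw [levelSlope, eq_div_iff (h.ne_zero _ (h.mapsTo_inv hq))]
  linarith [h.dirDeriv_right_inv 0 1 hq]

theorem contDiffOn_legendre (h : IsLegendreChart W X O V) : ContDiffOn ℝ ∞ (legendre W X) V :=
  (contDiffOn_snd.fst.mul h.contDiffOn_inv).sub
    (h.contDiffOn.comp (contDiffOn_fibreMap h.contDiffOn_inv) h.mapsTo_inv)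

theorem dirDeriv_legendre (h : IsLegendreChart W X O V) (s t : ℝ) {q : P × ℝ × ℝ} (hq : q ∈ V) :
    dirDeriv (0, s, t) (legendre W X) q = s * X q - t * ∂y W (fibreMap X q) := by
  have hWX : DifferentiableAt ℝ (fun q => W (fibreMap X q)) q :=
    differentiableAt_of_contDiffOn h.isOpen_target
      (h.contDiffOn.comp (contDiffOn_fibreMap h.contDiffOn_inv) h.mapsTo_inv) hq
  have hfst : HasFDerivAt (fun q : P × ℝ × ℝ => q.2.1) _ q :=
    ((ContinuousLinearMap.fst ℝ ℝ ℝ).comp (ContinuousLinearMap.snd ℝ P (ℝ × ℝ))).hasFDerivAt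
  have hcomp := h.dirDeriv_comp h.contDiffOn s t hq
  rw [h.right_inv q hq] at hcomp
  calc dirDeriv (0, s, t) (legendre W X) q
      = q.2.1 * dirDeriv (0, s, t) X q + X q * s
        - dirDeriv (0, s, t) (fun q => W (fibreMap X q)) q :=
        congrArg (· (0, s, t)) ((hfst.mul (h.differentiableAt_inv hq).hasFDerivAt).sub
          hWX.hasFDerivAt).fderiv
    _ = s * X q - t * ∂y W (fibreMap X q) := by rw [hcomp]; ring

theorem dirDeriv_legendre_fst (h : IsLegendreChart W X O V) : EqOn (∂x (legendre W X)) X V :=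
  fun q hq => by simpa using h.dirDeriv_legendre 1 0 hq

theorem dirDeriv_comp_snd (h : IsLegendreChart W X O V) {f : P × ℝ × ℝ → ℝ}
    (hf : ContDiffOn ℝ ∞ f O) {q : P × ℝ × ℝ} (hq : q ∈ V) :
    ∂y (fun q => f (fibreMap X q)) q = levelDeriv W f (fibreMap X q) := by
  rw [h.dirDeriv_comp hf 0 1 hq, h.dirDeriv_inv_snd hq, levelDeriv]
  ring

theorem iterate_dirDeriv_legendre_snd (h : IsLegendreChart W X O V) (j : ℕ) {q : P × ℝ × ℝ}
    (hq : q ∈ V) :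
    (∂y)^[j + 1] (legendre W X) q = -(levelDeriv W)^[j] (∂y W) (fibreMap X q) := by
  induction j generalizing q with
  | zero => simpa using h.dirDeriv_legendre 0 1 hq
  | succ j ih =>
    have smooth : ContDiffOn ℝ ∞ ((levelDeriv W)^[j] (∂y W)) O :=
      Function.Iterate.rec (fun g => ContDiffOn ℝ ∞ g O)
        (contDiffOn_dirDeriv _ h.isOpen_source h.contDiffOn)
          (fun _ => contDiffOn_levelDeriv h.isOpen_source h.contDiffOn h.ne_zero) j
    rw [Function.iterate_succ_apply', dirDeriv_congr _ h.isOpen_target (fun q => ih) hq,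
      dirDeriv_neg, h.dirDeriv_comp_snd smooth hq, Function.iterate_succ_apply']

end IsLegendreChart

end Legendre

/-! ### Oscillatory integrals in Legendre coordinates -/

section Model

theorem hasDerivAt_intervalIntegral_of_continuousOn {E : Type*} [NormedAddCommGroup E]
    [NormedSpace ℝ E] {f f' : ℝ × ℝ → E} {Ω : Set (ℝ × ℝ)} {x a b : ℝ} (hab : a ≤ b)
    (hΩ : IsOpen Ω) (hx : ∀ y ∈ Icc a b, (x, y) ∈ Ω) (hf' : ContinuousOn f' Ω)
    (hf : ContinuousOn f Ω)
    (hderiv : ∀ z ∈ Ω, HasDerivAt (fun x => f (x, z.2)) (f' z) z.1) :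
    HasDerivAt (fun x => ∫ y in a..b, f (x, y)) (∫ y in a..b, f' (x, y)) x := by
  obtain ⟨u, w, hu, -, hxu, hw, huw⟩ := generalized_tube_lemma (isCompact_singleton (x := x))
    (isCompact_Icc (a := a) (b := b)) hΩ fun z hz => by
      obtain ⟨z₁, z₂⟩ := z
      obtain ⟨rfl, hz₂⟩ := hz
      exact hx z₂ hz₂
  obtain ⟨ε, hε, hball⟩ := Metric.nhds_basis_closedBall.mem_iff.1 (hu.mem_nhds (hxu rfl))
  have hsub : Metric.closedBall x ε ×ˢ Icc a b ⊆ Ω := (prod_mono hball hw).trans huw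
  obtain ⟨C, hC⟩ := ((isCompact_closedBall x ε).prod isCompact_Icc).exists_bound_of_continuousOn
    (hf'.mono hsub)
  have slice : ∀ g : ℝ × ℝ → E, ContinuousOn g Ω → ∀ x' ∈ Metric.closedBall x ε,
      ContinuousOn (fun y => g (x', y)) (uIcc a b) := fun g hg x' hx' =>
    hg.comp (f := fun y => (x', y)) (by fun_prop) fun y hy => hsub ⟨hx', uIcc_of_le hab ▸ hy⟩
  have measurable : ∀ g : ℝ × ℝ → E, ContinuousOn g Ω → ∀ x' ∈ Metric.closedBall x ε,
      AEStronglyMeasurable (fun y => g (x', y)) (volume.restrict (uIoc a b)) := fun g hg x' hx' =>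
    ((slice g hg x' hx').mono uIoc_subset_uIcc).aestronglyMeasurable measurableSet_uIoc
  have hnhds := Metric.closedBall_mem_nhds x hε
  have hx₀ := Metric.mem_closedBall_self hε.le (x := x)
  have hIcc : ∀ y ∈ uIoc a b, y ∈ Icc a b := fun y hy => uIcc_of_le hab ▸ uIoc_subset_uIcc hy
  exact (intervalIntegral.hasDerivAt_integral_of_dominated_loc_of_deriv_le
    (F' := fun x y => f' (x, y)) hnhds
    (eventually_of_mem hnhds (measurable f hf)) (slice f hf x hx₀).intervalIntegrable
    (measurable f' hf' x hx₀)
    (Eventually.of_forall fun y hy x' hx' => hC (x', y) ⟨hx', hIcc y hy⟩)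
    intervalIntegrable_const
    (Eventually.of_forall fun y hy x' hx' => hderiv (x', y) (hsub ⟨hx', hIcc y hy⟩))).2

theorem sub_le_diam_of_forall_mem {P : Type*} [PseudoMetricSpace P] {K : Set (P × ℝ × ℝ)}
    (hK : Bornology.IsBounded K) {n : P} {r s m : ℝ} (hrs : r ≤ s)
    (hm : ∀ y ∈ Icc r s, (n, m, y) ∈ K) : s - r ≤ Metric.diam K := by
  have h := Metric.dist_le_diam_of_mem hK (hm s (right_mem_Icc.2 hrs))
    (hm r (left_mem_Icc.2 hrs))
  rw [Prod.dist_eq, Prod.dist_eq, Real.dist_eq] at h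
  exact (le_abs_self _).trans ((le_max_right _ _).trans ((le_max_right _ _).trans h))

theorem sub_le_diam_of_forall_forall_mem {P : Type*} [PseudoMetricSpace P]
    {K : Set (P × ℝ × ℝ)} (hK : Bornology.IsBounded K) {n : P} {p q r s : ℝ}
    (hpq : p ≤ q) (hrs : r ≤ s) (hsub : ∀ m ∈ Icc p q, ∀ y ∈ Icc r s, (n, m, y) ∈ K) :
    q - p ≤ Metric.diam K := by
  have hr := left_mem_Icc.2 hrs
  have h := Metric.dist_le_diam_of_mem hK (hsub q (right_mem_Icc.2 hpq) r hr)
    (hsub p (left_mem_Icc.2 hpq) r hr)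
  rw [Prod.dist_eq, Prod.dist_eq, Real.dist_eq] at h
  exact (le_abs_self _).trans ((le_max_left _ _).trans ((le_max_right _ _).trans h))

variable {P : Type*} [NormedAddCommGroup P] [NormedSpace ℝ P] {G b : P × ℝ × ℝ → ℝ}
  {K V : Set (P × ℝ × ℝ)} {v : ℝ × ℝ} {τ : ℝ}

/-- The phase `v·(x, y) - W` in the coordinates `m = ∂x W` and `y`, where `G` is the Legendre
transform of `W`: there `x = ∂x G` and `W = m ∂x G - G`. -/
noncomputable def legendrePhase (G : P × ℝ × ℝ → ℝ) (v : ℝ × ℝ) (q : P × ℝ × ℝ) : ℝ :=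
  v.2 * q.2.2 + (v.1 - q.2.1) * ∂x G q + G q

/-- The oscillating factor with phase `legendrePhase G v` and frequency `τ`, with amplitude `b`. -/
noncomputable def legendreWave (G b : P × ℝ × ℝ → ℝ) (v : ℝ × ℝ) (τ : ℝ) (q : P × ℝ × ℝ) : ℂ :=
  Complex.exp (Complex.I * (τ * legendrePhase G v q : ℝ)) * (b q : ℂ)

/-- The integral of `legendreWave G b v τ` over the segment `r ≤ y ≤ s` at height `m`. -/
noncomputable def fibreIntegral (G b : P × ℝ × ℝ → ℝ) (v : ℝ × ℝ) (τ : ℝ) (n : P) (r s m : ℝ) :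
    ℂ :=
  ∫ y in r..s, legendreWave G b v τ (n, m, y)

theorem norm_legendreWave (q : P × ℝ × ℝ) : ‖legendreWave G b v τ q‖ = |b q| := by
  rw [legendreWave, norm_mul, norm_cexp_I_mul_ofReal, one_mul, Complex.norm_real, norm_eq_abs]

theorem contDiffOn_legendrePhase (hV : IsOpen V) (hG : ContDiffOn ℝ ∞ G V) :
    ContDiffOn ℝ ∞ (legendrePhase G v) V :=
  ((contDiffOn_const.mul contDiffOn_snd.snd).add ((contDiffOn_const.sub contDiffOn_snd.fst).mul
    (contDiffOn_dirDeriv _ hV hG))).add hG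

theorem continuousOn_legendreWave (hV : IsOpen V) (hG : ContDiffOn ℝ ∞ G V)
    (hb : ContinuousOn b V) : ContinuousOn (legendreWave G b v τ) V :=
  (continuousOn_cexp_I_mul_ofReal
    (continuousOn_const.mul (contDiffOn_legendrePhase hV hG).continuousOn)).mul
    (Complex.continuous_ofReal.comp_continuousOn hb)

theorem hasDerivAt_legendreWave (hV : IsOpen V) (hG : ContDiffOn ℝ ∞ G V)
    (hb : ContDiffOn ℝ ∞ b V) {n : P} {m y : ℝ} (hq : (n, m, y) ∈ V) :
    HasDerivAt (fun m => Complex.I * legendreWave G b v τ (n, m, y))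
      ((τ * (m - v.1)) • legendreWave G (fun q => b q * ∂x (∂x G) q) v τ (n, m, y)
        + Complex.I * legendreWave G (∂x b) v τ (n, m, y)) m := by
  have hGx := contDiffOn_dirDeriv (0, 1, 0) hV hG
  have phase : HasDerivAt (fun m => legendrePhase G v (n, m, y))
      ((v.1 - m) * ∂x (∂x G) (n, m, y)) m := by
    refine HasDerivAt.congr_deriv (((((hasDerivAt_id m).const_sub v.1).fun_mul
      (hasDerivAt_dirDeriv_fst (differentiableAt_of_contDiffOn hV hGx hq))).const_add
      (v.2 * y)).fun_add
      (hasDerivAt_dirDeriv_fst (differentiableAt_of_contDiffOn hV hG hq))) ?_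
    simp only [id_eq]
    ring
  have amplitude := (hasDerivAt_dirDeriv_fst
    (differentiableAt_of_contDiffOn hV hb hq)).ofReal_comp
  refine ((((phase.const_mul τ).ofReal_comp.const_mul Complex.I).cexp.mul amplitude).const_mul
    Complex.I).congr_deriv ?_
  simp only [legendreWave, Complex.real_smul]
  push_cast
  linear_combination (exp := 1) (τ * (v.1 - m) * ∂x (∂x G) (n, m, y) * b (n, m, y) *
    Complex.exp (Complex.I * (τ * legendrePhase G v (n, m, y)))) * Complex.I_mul_I

theorem hasDerivAt_fibreIntegral (hV : IsOpen V) (hG : ContDiffOn ℝ ∞ G V)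
    (hb : ContDiffOn ℝ ∞ b V) {n : P} {r s m : ℝ} (hrs : r ≤ s)
    (hm : ∀ y ∈ Icc r s, (n, m, y) ∈ V) :
    HasDerivAt (fun m => Complex.I * fibreIntegral G b v τ n r s m)
      ((τ * (m - v.1)) • fibreIntegral G (fun q => b q * ∂x (∂x G) q) v τ n r s m
        + Complex.I * fibreIntegral G (∂x b) v τ n r s m) m := by
  have hslice : Continuous fun z : ℝ × ℝ => (n, z) := by fun_prop
  have cont : ∀ {b : P × ℝ × ℝ → ℝ}, ContDiffOn ℝ ∞ b V →
      ContinuousOn (fun z : ℝ × ℝ => legendreWave G b v τ (n, z)) ((n, ·) ⁻¹' V) := fun hb =>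
    (continuousOn_legendreWave hV hG hb.continuousOn).comp hslice.continuousOn fun _ hz => hz
  have contK := cont (hb.mul
    (contDiffOn_dirDeriv (0, 1, 0) hV (contDiffOn_dirDeriv (0, 1, 0) hV hG)))
  have contR := cont (contDiffOn_dirDeriv (0, 1, 0) hV hb)
  have integrable : ∀ {f : ℝ × ℝ → ℂ}, ContinuousOn f ((n, ·) ⁻¹' V) →
      IntervalIntegrable (fun y => f (m, y)) volume r s := fun hf =>
    ContinuousOn.intervalIntegrable_of_Icc hrs
      (hf.comp (f := fun y => (m, y)) (by fun_prop) fun y hy => hm y hy)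
  have hφ : Continuous fun z : ℝ × ℝ => τ * (z.1 - v.1) := by fun_prop
  have h := hasDerivAt_intervalIntegral_of_continuousOn
    (f := fun z => Complex.I * legendreWave G b v τ (n, z))
    (f' := fun z => (τ * (z.1 - v.1)) • legendreWave G (fun q => b q * ∂x (∂x G) q) v τ (n, z)
      + Complex.I * legendreWave G (∂x b) v τ (n, z))
    hrs (hV.preimage hslice) hm
    ((hφ.continuousOn.smul contK).add (continuousOn_const.mul contR))
    (continuousOn_const.mul (cont hb)) fun z hz => hasDerivAt_legendreWave hV hG hb hz
  simp only [fibreIntegral, ← intervalIntegral.integral_const_mul,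
    ← intervalIntegral.integral_smul]
  exact h.congr_deriv (intervalIntegral.integral_add ((integrable contK).smul (τ * (m - v.1)))
    ((integrable contR).const_mul Complex.I))

theorem continuousOn_fibreIntegral (hV : IsOpen V) (hG : ContDiffOn ℝ ∞ G V)
    (hb : ContDiffOn ℝ ∞ b V) {n : P} {p q r s : ℝ} (hrs : r ≤ s)
    (hsub : ∀ m ∈ Icc p q, ∀ y ∈ Icc r s, (n, m, y) ∈ V) :
    ContinuousOn (fibreIntegral G b v τ n r s) (Icc p q) := fun m hm => by
  have h := (hasDerivAt_fibreIntegral (v := v) (τ := τ) hV hG hb hrs (hsub m hm)).continuousAt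
  simpa [← mul_assoc] using (h.const_mul (-Complex.I)).continuousWithinAt (s := Icc p q)

theorem iterate_dirDeriv_legendrePhase (hV : IsOpen V) (hG : ContDiffOn ℝ ∞ G V) (j : ℕ)
    {q : P × ℝ × ℝ} (hq : q ∈ V) :
    (∂y)^[j + 2] (legendrePhase G v) q
      = (v.1 - q.2.1) * (∂y)^[j + 2] (∂x G) q + (∂y)^[j + 2] G q := by
  have hGx := contDiffOn_dirDeriv (0, 1, 0) hV hG
  have step : ∀ {f g h : P × ℝ × ℝ → ℝ} {c : ℝ → ℝ} {c' : ℝ} {q : P × ℝ × ℝ},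
      ContDiffOn ℝ ∞ f V → ContDiffOn ℝ ∞ g V → ContDiffOn ℝ ∞ h V →
      EqOn f (fun q => c q.2.2 + (v.1 - q.2.1) * g q + h q) V → q ∈ V → HasDerivAt c c' q.2.2 →
      ∂y f q = c' + (v.1 - q.2.1) * ∂y g q + ∂y h q := by
    intro f g h c c' ⟨n, m, y⟩ hf hg hh hfgh hq hc
    refine (hasDerivAt_dirDeriv_snd (differentiableAt_of_contDiffOn hV hf hq)).unique ?_
    refine ((hc.fun_add ((hasDerivAt_dirDeriv_snd
      (differentiableAt_of_contDiffOn hV hg hq)).const_mul (v.1 - m))).fun_add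
      (hasDerivAt_dirDeriv_snd (differentiableAt_of_contDiffOn hV hh hq))).congr_of_eventuallyEq ?_
    have hslice : Continuous fun y : ℝ => (n, m, y) := by fun_prop
    filter_upwards [(hV.preimage hslice).mem_nhds hq] with y hy using hfgh hy
  have smooth := contDiffOn_iterate_dirDeriv (0, 0, 1) hV (contDiffOn_legendrePhase (v := v) hV hG)
  induction j generalizing q with
  | zero =>
    have first : EqOn (∂y (legendrePhase G v))
        (fun q => v.2 + (v.1 - q.2.1) * ∂y (∂x G) q + ∂y G q) V := fun q hq =>
      step (smooth 0) hGx hG (c := fun y => v.2 * y) (fun _ _ => rfl) hq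
        (by simpa using (hasDerivAt_id q.2.2).const_mul v.2)
    exact (step (c := fun _ => v.2) (smooth 1) (contDiffOn_dirDeriv _ hV hGx)
      (contDiffOn_dirDeriv _ hV hG) first hq (hasDerivAt_const _ _)).trans (by rw [zero_add]; rfl)
  | succ j ih =>
    rw [Function.iterate_succ_apply' _ (j + 2)]
    refine (step (c := fun _ => 0) (smooth (j + 2))
      (contDiffOn_iterate_dirDeriv (0, 0, 1) hV hGx (j + 2))
      (contDiffOn_iterate_dirDeriv (0, 0, 1) hV hG (j + 2)) (fun q hq => (ih hq).trans ?_) hq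
      (hasDerivAt_const _ _)).trans ?_
    · simp only [zero_add]
    · rw [zero_add, Function.iterate_succ_apply' _ (j + 2), Function.iterate_succ_apply' _ (j + 2)]

theorem exists_norm_fibreIntegral_le (hK : IsCompact K) (hb : ContinuousOn b K) :
    ∃ C ≥ 0, ∀ (G : P × ℝ × ℝ → ℝ) (v : ℝ × ℝ) (τ : ℝ) (n : P) (r s m : ℝ), r ≤ s →
      (∀ y ∈ Icc r s, (n, m, y) ∈ K) → ‖fibreIntegral G b v τ n r s m‖ ≤ C := by
  obtain ⟨C, hC⟩ := hK.exists_bound_of_continuousOn hb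
  refine ⟨|C| * Metric.diam K, by positivity, fun G v τ n r s m hrs hm => ?_⟩
  refine (intervalIntegral.norm_integral_le_of_norm_le_const (C := |C|) fun y hy => ?_).trans ?_
  · rw [norm_legendreWave]
    exact (hC _ (hm y (Ioc_subset_Icc_self (uIoc_of_le hrs ▸ hy)))).trans (le_abs_self C)
  · rw [abs_of_nonneg (sub_nonneg.2 hrs)]
    gcongr
    exact sub_le_diam_of_forall_mem hK.isBounded hrs hm

theorem exists_norm_fibreIntegral_le_rpow (hV : IsOpen V) (hG : ContDiffOn ℝ ∞ G V)
    (hK : IsCompact K) (hKV : K ⊆ V) (hb : ContDiffOn ℝ ∞ b V) (k : ℕ) {l : ℝ} (hl : 0 < l) :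
    ∃ C ≥ 0, ∀ (v : ℝ × ℝ) (τ : ℝ) (n : P) (r s m : ℝ), 0 < τ → r ≤ s →
      (∀ y ∈ Icc r s, (n, m, y) ∈ K) →
      (∀ y ∈ Icc r s, l ≤ |(∂y)^[k + 2] (legendrePhase G v) (n, m, y)|) →
      ‖fibreIntegral G b v τ n r s m‖ ≤ C * τ ^ (-1 / (k + 2) : ℝ) := by
  obtain ⟨C, hC, vanDerCorput⟩ := exists_norm_integral_cexp_mul_le_rpow k
  have hby := contDiffOn_dirDeriv (0, 0, 1) hV hb
  obtain ⟨M, hM⟩ := hK.exists_bound_of_continuousOn (hb.continuousOn.mono hKV)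
  obtain ⟨M', hM'⟩ := hK.exists_bound_of_continuousOn (hby.continuousOn.mono hKV)
  refine ⟨C * l ^ (-1 / (k + 2) : ℝ) * (|M| + |M'| * Metric.diam K), by positivity,
    fun v τ n r s m hτ hrs hm hlow => ?_⟩
  have hmV : ∀ y ∈ Icc r s, (n, m, y) ∈ V := fun y hy => hKV (hm y hy)
  have smooth := contDiffOn_iterate_dirDeriv (0, 0, 1) hV (contDiffOn_legendrePhase (v := v) hV hG)
  have slice : ∀ {f : P × ℝ × ℝ → ℝ}, ContDiffOn ℝ ∞ f V →
      ContinuousOn (fun y => f (n, m, y)) (Icc r s) := fun hf =>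
    hf.continuousOn.comp (f := fun y => (n, m, y)) (by fun_prop) hmV
  refine (vanDerCorput (fun i y => τ * (∂y)^[i] (legendrePhase G v) (n, m, y))
    (fun y => (b (n, m, y) : ℂ)) (fun y => (∂y b (n, m, y) : ℂ)) r s (τ * l) |M| |M'| hrs
    (mul_pos hτ hl) (fun i _ y hy => ?_) (continuousOn_const.mul (slice (smooth _)))
    (fun y hy => ?_) (fun y hy => ?_)
    (Complex.continuous_ofReal.comp_continuousOn (slice hby)) (fun y hy => ?_)
    (fun y hy => ?_)).trans ?_
  · rw [Function.iterate_succ_apply']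
    exact (hasDerivAt_dirDeriv_snd
      (differentiableAt_of_contDiffOn hV (smooth i) (hmV y hy))).const_mul τ
  · rw [abs_mul, abs_of_pos hτ]
    exact mul_le_mul_of_nonneg_left (hlow y hy) hτ.le
  · exact (hasDerivAt_dirDeriv_snd (differentiableAt_of_contDiffOn hV hb (hmV y hy))).ofReal_comp
  · exact (Complex.norm_real _).le.trans ((hM _ (hm y hy)).trans (le_abs_self M))
  · exact (Complex.norm_real _).le.trans ((hM' _ (hm y hy)).trans (le_abs_self M'))
  · rw [mul_rpow hτ.le hl.le]
    calc _ ≤ C * (τ ^ (-1 / (k + 2) : ℝ) * l ^ (-1 / (k + 2) : ℝ))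
          * (|M| + |M'| * Metric.diam K) := by
          gcongr
          exact sub_le_diam_of_forall_mem hK.isBounded hrs hm
      _ = _ := by ring

theorem exists_norm_integral_fibreIntegral_le_of_near (hV : IsOpen V) (hG : ContDiffOn ℝ ∞ G V)
    (hK : IsCompact K) (hKV : K ⊆ V) (hb : ContDiffOn ℝ ∞ b V) (k : ℕ) {l : ℝ} (hl : 0 < l) :
    ∃ C ≥ 0, ∀ (v : ℝ × ℝ) (τ : ℝ) (n : P) (p q r s : ℝ), 0 < τ → p ≤ q → r ≤ s →
      (∀ m ∈ Icc p q, ∀ y ∈ Icc r s, (n, m, y) ∈ K) →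
      (∀ m ∈ Icc p q, ∀ y ∈ Icc r s, l ≤ |(∂y)^[k + 2] (legendrePhase G v) (n, m, y)|) →
      ‖∫ m in p..q, fibreIntegral G (fun q => b q * ∂x (∂x G) q) v τ n r s m‖
        ≤ C * τ ^ (-(1 / 2 + 1 / (k + 2)) : ℝ) := by
  have hbG : ContDiffOn ℝ ∞ (fun q => b q * ∂x (∂x G) q) V :=
    hb.mul (contDiffOn_dirDeriv _ hV (contDiffOn_dirDeriv _ hV hG))
  have hbx := contDiffOn_dirDeriv (0, 1, 0) hV hb
  obtain ⟨C₁, hC₁, boundK⟩ := exists_norm_fibreIntegral_le_rpow hV hG hK hKV hbG k hl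
  obtain ⟨C₂, hC₂, boundZ⟩ := exists_norm_fibreIntegral_le_rpow hV hG hK hKV hb k hl
  obtain ⟨C₃, hC₃, boundR⟩ := exists_norm_fibreIntegral_le_rpow hV hG hK hKV hbx k hl
  refine ⟨10 * (C₁ + C₂) + 2 * C₃ * Metric.diam K, by positivity,
    fun v τ n p q r s hτ hpq hrs hsub hlow => ?_⟩
  have hsubV : ∀ m ∈ Icc p q, ∀ y ∈ Icc r s, (n, m, y) ∈ V := fun m hm y hy =>
    hKV (hsub m hm y hy)
  set σ := τ ^ (-1 / (k + 2) : ℝ) with hσ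
  have hσ₀ : 0 ≤ σ := rpow_nonneg hτ.le _
  have h := norm_integral_le_rpow_neg_half (M := (C₁ + C₂) * σ) (M' := C₃ * σ) hpq hτ
    (fun m hm => hasDerivAt_fibreIntegral (v := v) (τ := τ) hV hG hb hrs (hsubV m hm))
    (continuousOn_fibreIntegral hV hG hbG hrs hsubV)
    (continuousOn_const.mul (continuousOn_fibreIntegral hV hG hbx hrs hsubV))
    (fun m hm => (boundK v τ n r s m hτ hrs (hsub m hm) (hlow m hm)).trans
      (mul_le_mul_of_nonneg_right (by linarith) hσ₀))
    (fun m hm => by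
      rw [norm_mul, Complex.norm_I, one_mul]
      exact (boundZ v τ n r s m hτ hrs (hsub m hm) (hlow m hm)).trans
        (mul_le_mul_of_nonneg_right (by linarith) hσ₀))
    (fun m hm => by
      rw [norm_mul, Complex.norm_I, one_mul]
      exact boundR v τ n r s m hτ hrs (hsub m hm) (hlow m hm))
  calc _ ≤ _ := h
    _ ≤ (10 * ((C₁ + C₂) * σ) + 2 * (C₃ * σ) * Metric.diam K) * τ ^ (-1 / 2 : ℝ) := by
        gcongr
        exact sub_le_diam_of_forall_forall_mem hK.isBounded hpq hrs hsub
    _ = (10 * (C₁ + C₂) + 2 * C₃ * Metric.diam K) * (τ ^ (-1 / 2 : ℝ) * σ) := by ring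
    _ = _ := by rw [hσ, ← rpow_add hτ]; congr 2; ring

theorem exists_norm_integral_fibreIntegral_le_of_far (hV : IsOpen V) (hG : ContDiffOn ℝ ∞ G V)
    (hK : IsCompact K) (hKV : K ⊆ V) (hb : ContDiffOn ℝ ∞ b V) {μ : ℝ} (hμ : 0 < μ) :
    ∃ C ≥ 0, ∀ (v : ℝ × ℝ) (τ : ℝ) (n : P) (p q r s : ℝ), 0 < τ → p ≤ q → r ≤ s →
      (∀ m ∈ Icc p q, ∀ y ∈ Icc r s, (n, m, y) ∈ K) → (∀ m ∈ Icc p q, μ ≤ |m - v.1|) →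
      ‖∫ m in p..q, fibreIntegral G (fun q => b q * ∂x (∂x G) q) v τ n r s m‖
        ≤ C * τ ^ (-1 : ℝ) := by
  have hbG : ContDiffOn ℝ ∞ (fun q => b q * ∂x (∂x G) q) V :=
    hb.mul (contDiffOn_dirDeriv _ hV (contDiffOn_dirDeriv _ hV hG))
  have hbx := contDiffOn_dirDeriv (0, 1, 0) hV hb
  obtain ⟨C₁, hC₁, boundZ⟩ := exists_norm_fibreIntegral_le hK (hb.continuousOn.mono hKV)
  obtain ⟨C₂, hC₂, boundR⟩ := exists_norm_fibreIntegral_le hK (hbx.continuousOn.mono hKV)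
  refine ⟨(4 * C₁ + C₂ * Metric.diam K) / μ, by positivity,
    fun v τ n p q r s hτ hpq hrs hsub hfar => ?_⟩
  have hsubV : ∀ m ∈ Icc p q, ∀ y ∈ Icc r s, (n, m, y) ∈ V := fun m hm y hy =>
    hKV (hsub m hm y hy)
  have h := norm_integral_le_of_hasDerivAt_smul_add (φ := fun m => τ * (m - v.1)) (M := C₁)
    (M' := C₂) hpq (fun m _ => ((hasDerivAt_id m).sub_const v.1).const_mul τ) continuousOn_const
    (fun _ _ => by positivity) (mul_pos hτ hμ)
    (fun m hm => by
      rw [abs_mul, abs_of_pos hτ]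
      exact mul_le_mul_of_nonneg_left (hfar m hm) hτ.le)
    (fun m hm => hasDerivAt_fibreIntegral (v := v) (τ := τ) hV hG hb hrs (hsubV m hm))
    (continuousOn_fibreIntegral hV hG hbG hrs hsubV)
    (continuousOn_const.mul (continuousOn_fibreIntegral hV hG hbx hrs hsubV))
    (fun m hm => by
      rw [norm_mul, Complex.norm_I, one_mul]
      exact boundZ G v τ n r s m hrs (hsub m hm))
    (fun m hm => by
      rw [norm_mul, Complex.norm_I, one_mul]
      exact boundR G v τ n r s m hrs (hsub m hm))
  calc _ ≤ _ := h
    _ ≤ (4 * C₁ + C₂ * Metric.diam K) / (τ * μ) := by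
        gcongr
        exact sub_le_diam_of_forall_forall_mem hK.isBounded hpq hrs hsub
    _ = _ := by rw [rpow_neg_one]; field_simp

theorem exists_isCompact_forall_le_abs_iterate_dirDeriv_legendrePhase [ProperSpace P]
    (hV : IsOpen V) (hG : ContDiffOn ℝ ∞ G V) {q₀ : P × ℝ × ℝ} (hq₀ : q₀ ∈ V) (k : ℕ)
    (hne : (∂y)^[k + 2] G q₀ ≠ 0) :
    ∃ K ∈ 𝓝 q₀, IsCompact K ∧ K ⊆ V ∧ ∃ l > 0, ∃ ρ > 0, Metric.diam K ≤ ρ ∧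
      ∀ q ∈ K, ∀ v : ℝ × ℝ, |v.1 - q.2.1| ≤ 2 * ρ →
        l ≤ |(∂y)^[k + 2] (legendrePhase G v) q| := by
  set c := |(∂y)^[k + 2] G q₀|
  set M := |(∂y)^[k + 2] (∂x G) q₀| + 1
  have hc₀ : 0 < c := abs_pos.2 hne
  have hM₀ : 0 < M := by positivity
  have continuousAt : ∀ {f : P × ℝ × ℝ → ℝ}, ContDiffOn ℝ ∞ f V →
      ContinuousAt ((∂y)^[k + 2] f) q₀ := fun hf =>
    (contDiffOn_iterate_dirDeriv _ hV hf _).continuousOn.continuousAt (hV.mem_nhds hq₀)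
  have near : ∀ᶠ q in 𝓝 q₀, q ∈ V ∧ c / 2 < |(∂y)^[k + 2] G q| ∧ |(∂y)^[k + 2] (∂x G) q| < M :=
    (hV.eventually_mem hq₀).and
      (((continuousAt hG).abs.eventually_const_lt (half_lt_self hc₀)).and
        ((continuousAt (contDiffOn_dirDeriv _ hV hG)).abs.eventually_lt_const (lt_add_one _)))
  obtain ⟨ε, hε, hball⟩ := Metric.nhds_basis_closedBall.mem_iff.1 near
  set ρ := c / (8 * M) with hρ
  have hρ₀ : 0 < ρ := by positivity
  have hsub : ∀ q ∈ Metric.closedBall q₀ (min ε (ρ / 2)), q ∈ V ∧ c / 2 < |(∂y)^[k + 2] G q| ∧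
      |(∂y)^[k + 2] (∂x G) q| < M :=
    fun q hq => hball (Metric.closedBall_subset_closedBall (min_le_left _ _) hq)
  refine ⟨Metric.closedBall q₀ (min ε (ρ / 2)), Metric.closedBall_mem_nhds _ (by positivity),
    isCompact_closedBall _ _, fun q hq => (hsub q hq).1, c / 4, by positivity, ρ, hρ₀,
    (Metric.diam_closedBall (by positivity)).trans (by linarith [min_le_right ε (ρ / 2)]),
    fun q hq v hv => ?_⟩
  obtain ⟨hqV, hlow, hup⟩ := hsub q hq
  have small : |(v.1 - q.2.1) * (∂y)^[k + 2] (∂x G) q| ≤ c / 4 := by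
    rw [abs_mul]
    calc _ ≤ 2 * ρ * M := by gcongr
      _ = c / 4 := by rw [hρ]; field_simp; norm_num
  rw [iterate_dirDeriv_legendrePhase hV hG k hqV,
    add_comm ((v.1 - q.2.1) * (∂y)^[k + 2] (∂x G) q)]
  linarith [abs_sub_abs_le_abs_add ((∂y)^[k + 2] G q) ((v.1 - q.2.1) * (∂y)^[k + 2] (∂x G) q)]

-- Where `v₁` stays within the size of `K` of `m`, the phase is a small perturbation of `G` in `y`;
-- elsewhere it is nonstationary in `m`.
theorem exists_mem_nhds_norm_integral_fibreIntegral_le [ProperSpace P] (hV : IsOpen V)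
    (hG : ContDiffOn ℝ ∞ G V) {q₀ : P × ℝ × ℝ} (hq₀ : q₀ ∈ V) (k : ℕ)
    (hne : (∂y)^[k + 2] G q₀ ≠ 0) :
    ∃ K ∈ 𝓝 q₀, K ⊆ V ∧ ∀ b : P × ℝ × ℝ → ℝ, ContDiffOn ℝ ∞ b V → ∃ C ≥ 0,
      ∀ (v : ℝ × ℝ) (τ : ℝ) (n : P) (p q r s : ℝ), 1 ≤ τ → p ≤ q → r ≤ s →
        (∀ m ∈ Icc p q, ∀ y ∈ Icc r s, (n, m, y) ∈ K) →
        ‖∫ m in p..q, fibreIntegral G (fun q => b q * ∂x (∂x G) q) v τ n r s m‖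
          ≤ C * τ ^ (-(1 / 2 + 1 / (k + 2)) : ℝ) := by
  obtain ⟨K, hKq₀, hK, hKV, l, hl, ρ, hρ, hdiam, hlow⟩ :=
    exists_isCompact_forall_le_abs_iterate_dirDeriv_legendrePhase hV hG hq₀ k hne
  refine ⟨K, hKq₀, hKV, fun b hb => ?_⟩
  obtain ⟨C₁, hC₁, bound_near⟩ :=
    exists_norm_integral_fibreIntegral_le_of_near hV hG hK hKV hb k hl
  obtain ⟨C₂, hC₂, bound_far⟩ := exists_norm_integral_fibreIntegral_le_of_far hV hG hK hKV hb hρ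
  refine ⟨C₁ + C₂, by positivity, fun v τ n p q r s hτ hpq hrs hsub => ?_⟩
  have hτ₀ : 0 < τ := by linarith
  by_cases hfar : ∀ m ∈ Icc p q, ρ ≤ |m - v.1|
  · have hpow : τ ^ (-1 : ℝ) ≤ τ ^ (-(1 / 2 + 1 / (k + 2)) : ℝ) := by
      refine rpow_le_rpow_of_exponent_le hτ (neg_le_neg ?_)
      have : (1 / (k + 2) : ℝ) ≤ 1 / 2 := by gcongr; linarith [k.cast_nonneg (α := ℝ)]
      linarith
    exact (bound_far v τ n p q r s hτ₀ hpq hrs hsub hfar).trans (by gcongr; linarith)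
  push Not at hfar
  obtain ⟨m₁, hm₁, hmv⟩ := hfar
  refine (bound_near v τ n p q r s hτ₀ hpq hrs hsub fun m hm y hy =>
    hlow _ (hsub m hm y hy) v (abs_le.2 ?_)).trans (by gcongr; linarith)
  have := sub_le_diam_of_forall_forall_mem hK.isBounded hpq hrs hsub
  rw [abs_lt] at hmv
  constructor <;> linarith [hm₁.1, hm₁.2, hm.1, hm.2]

end Model

/-! ### Change of variables to Legendre coordinates -/

section Local

theorem det_prod_snd (L : ℝ × ℝ →L[ℝ] ℝ) :
    (L.prod (ContinuousLinearMap.snd ℝ ℝ ℝ)).det = L (1, 0) := by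
  have matrix : (L.prod (ContinuousLinearMap.snd ℝ ℝ ℝ) : ℝ × ℝ →ₗ[ℝ] ℝ × ℝ)
      = Matrix.toLin (.finTwoProd ℝ) (.finTwoProd ℝ) !![L (1, 0), L (0, 1); 0, 1] := by
    rw [Matrix.toLin_finTwoProd]
    ext <;> simp
  rw [ContinuousLinearMap.det, matrix, LinearMap.det_toLin, Matrix.det_fin_two_of, mul_one,
    mul_zero, sub_zero]

variable {P : Type*} [NormedAddCommGroup P] [NormedSpace ℝ P]

/-- The integrand of the dispersive estimate: a plane wave with phase `v·ξ - W (n, ξ)`, frequency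
`τ` and amplitude `a`. -/
noncomputable def planeWave (W : P × ℝ × ℝ → ℝ) (a : ℝ × ℝ → ℝ) (v : ℝ × ℝ) (τ : ℝ) (n : P)
    (ξ : ℝ × ℝ) : ℂ :=
  Complex.exp (Complex.I * (τ * (v.1 * ξ.1 + v.2 * ξ.2 - W (n, ξ)) : ℝ)) * (a ξ : ℂ)

theorem continuousOn_planeWave {P : Type*} {W : P × ℝ × ℝ → ℝ} {n : P} {T : Set (ℝ × ℝ)}
    (hW : ContinuousOn (fun ξ => W (n, ξ)) T) {a : ℝ × ℝ → ℝ} (ha : Continuous a) (v : ℝ × ℝ)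
    (τ : ℝ) : ContinuousOn (planeWave W a v τ n) T := by
  have hv : Continuous fun ξ : ℝ × ℝ => v.1 * ξ.1 + v.2 * ξ.2 := by fun_prop
  exact (continuousOn_cexp_I_mul_ofReal (continuousOn_const.mul (hv.continuousOn.sub hW))).mul
    (Complex.continuous_ofReal.comp_continuousOn ha.continuousOn)

variable {W X : P × ℝ × ℝ → ℝ} {O V : Set (P × ℝ × ℝ)} {n : P}

namespace IsLegendreChart

theorem injOn_section (h : IsLegendreChart W X O V) (n : P) :
    InjOn (fun z : ℝ × ℝ => (X (n, z), z.2)) ((n, ·) ⁻¹' V) := by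
  rintro ⟨m, y⟩ hz ⟨m', y'⟩ hz' heq
  obtain ⟨hX, rfl⟩ := Prod.ext_iff.1 heq
  have hX : X (n, m, y) = X (n, m', y) := hX
  have hm := h.right_inv _ hz
  rw [fibreMap, hX] at hm
  exact Prod.ext (hm.symm.trans (h.right_inv _ hz')) rfl

theorem hasFDerivAt_section (h : IsLegendreChart W X O V) {z : ℝ × ℝ} (hz : (n, z) ∈ V) :
    HasFDerivAt (fun z : ℝ × ℝ => (X (n, z), z.2))
      (((fderiv ℝ X (n, z)).comp (ContinuousLinearMap.inr ℝ P (ℝ × ℝ))).prod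
        (ContinuousLinearMap.snd ℝ ℝ ℝ)) z :=
  ((h.differentiableAt_inv hz).hasFDerivAt.comp z (hasFDerivAt_prodMk_right n z)).prodMk
    hasFDerivAt_snd

theorem integral_image_section (h : IsLegendreChart W X O V) {p q r s : ℝ} (hpq : p ≤ q)
    (hrs : r ≤ s) (hsub : ∀ m ∈ Icc p q, ∀ y ∈ Icc r s, (n, m, y) ∈ V) {F : ℝ × ℝ → ℂ}
    (hF : ContinuousOn F ((n, ·) ⁻¹' O)) :
    ∫ ξ in (fun z : ℝ × ℝ => (X (n, z), z.2)) '' (Icc p q ×ˢ Icc r s), F ξ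
      = ∫ m in p..q, ∫ y in r..s, |∂x X (n, m, y)| • F (X (n, m, y), y) := by
  have hR : Icc p q ×ˢ Icc r s ⊆ (n, ·) ⁻¹' V := fun z hz => hsub z.1 hz.1 z.2 hz.2
  have hslice : ContinuousOn (fun z : ℝ × ℝ => (n, z)) (Icc p q ×ˢ Icc r s) := by fun_prop
  have hX := h.contDiffOn_inv.continuousOn.comp hslice hR
  have hXx := (contDiffOn_dirDeriv (0, 1, 0) h.isOpen_target h.contDiffOn_inv).continuousOn.comp
    hslice hR
  have integrable : IntegrableOn (fun z : ℝ × ℝ => |∂x X (n, z)| • F (X (n, z), z.2))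
      (Icc p q ×ˢ Icc r s) (volume.prod volume) :=
    (hXx.abs.smul (hF.comp (hX.prodMk continuousOn_snd) fun z hz =>
      h.mapsTo_inv (hR hz))).integrableOn_compact
      (isCompact_Icc.prod isCompact_Icc)
  rw [integral_image_eq_integral_abs_det_fderiv_smul volume
    (measurableSet_Icc.prod measurableSet_Icc)
    (fun z hz => (h.hasFDerivAt_section (hR hz)).hasFDerivWithinAt) ((h.injOn_section n).mono hR)]
  simp only [det_prod_snd]
  refine (setIntegral_prod _ integrable).trans ?_
  simp only [integral_Icc_eq_integral_Ioc, ← intervalIntegral.integral_of_le hrs,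
    ← intervalIntegral.integral_of_le hpq]

theorem smul_planeWave (h : IsLegendreChart W X O V) (a : ℝ × ℝ → ℝ) (v : ℝ × ℝ) (τ : ℝ)
    {m y : ℝ} (hq : (n, m, y) ∈ V) :
    |∂x X (n, m, y)| • planeWave W a v τ n (X (n, m, y), y)
      = legendreWave (legendre W X) (fun q => a (X q, q.2.2) * (|∂x X q| / ∂x X q)
        * ∂x (∂x (legendre W X)) q) v τ (n, m, y) := by
  have hne : ∂x X (n, m, y) ≠ 0 := by
    rw [h.dirDeriv_inv_fst hq]
    exact inv_ne_zero (h.ne_zero _ (h.mapsTo_inv hq))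
  have phase : legendrePhase (legendre W X) v (n, m, y)
      = v.1 * X (n, m, y) + v.2 * y - W (n, X (n, m, y), y) := by
    rw [legendrePhase, h.dirDeriv_legendre_fst hq, legendre, fibreMap]
    ring
  rw [planeWave, legendreWave, phase,
    dirDeriv_congr _ h.isOpen_target h.dirDeriv_legendre_fst hq, mul_assoc (a _),
    div_mul_cancel₀ _ hne, Complex.real_smul]
  push_cast
  ring

theorem contDiffOn_abs_div (h : IsLegendreChart W X O V) :
    ContDiffOn ℝ ∞ (fun q => |∂x X q| / ∂x X q) V := by
  have hXx := contDiffOn_dirDeriv (0, 1, 0) h.isOpen_target h.contDiffOn_inv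
  have hne : ∀ q ∈ V, ∂x X q ≠ 0 := fun q hq => by
    rw [h.dirDeriv_inv_fst hq]
    exact inv_ne_zero (h.ne_zero _ (h.mapsTo_inv hq))
  exact ContDiffOn.div (fun q hq => (contDiffAt_abs (hne q hq)).comp_contDiffWithinAt q (hXx q hq))
    hXx hne

theorem mem_iff_mem_image_section (h : IsLegendreChart W X O V) {R : Set (ℝ × ℝ)}
    (hR : ∀ z ∈ R, (n, z) ∈ V) {ξ : ℝ × ℝ} (hξ : (n, ξ) ∈ O) :
    (∂x W (n, ξ), ξ.2) ∈ R ↔ ξ ∈ (fun z : ℝ × ℝ => (X (n, z), z.2)) '' R := by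
  constructor
  · exact fun hz => ⟨_, hz, Prod.ext (h.left_inv _ hξ) rfl⟩
  · rintro ⟨z, hz, rfl⟩
    rwa [show (∂x W (n, X (n, z), z.2), z.2) = z from Prod.ext (h.right_inv _ (hR z hz)) rfl]

end IsLegendreChart

theorem IsLegendreChart.setIntegral_planeWave_eq (h : IsLegendreChart W X O V) {a : ℝ × ℝ → ℝ}
    (ha : Continuous a) {S : Set (ℝ × ℝ)} (haO : ∀ ξ ∈ Function.support a, (n, ξ) ∈ O)
    (hS : MeasurableSet S) {p q r s : ℝ} (haS : ∀ ξ ∈ Function.support a,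
      ξ ∈ S ↔ ∂x W (n, ξ) ∈ Icc p q ∧ ξ.2 ∈ Icc r s) (hpq : p ≤ q) (hrs : r ≤ s)
    (hsub : ∀ m ∈ Icc p q, ∀ y ∈ Icc r s, (n, m, y) ∈ V) (v : ℝ × ℝ) (τ : ℝ) :
    ∫ ξ in S, planeWave W a v τ n ξ
      = ∫ m in p..q, fibreIntegral (legendre W X) (fun q => a (X q, q.2.2) * (|∂x X q| / ∂x X q)
        * ∂x (∂x (legendre W X)) q) v τ n r s m := by
  have hR : ∀ z ∈ Icc p q ×ˢ Icc r s, (n, z) ∈ V := fun z hz => hsub z.1 hz.1 z.2 hz.2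
  have measurable : MeasurableSet
      ((fun z : ℝ × ℝ => (X (n, z), z.2)) '' (Icc p q ×ˢ Icc r s)) := by
    refine ((isCompact_Icc.prod isCompact_Icc).image_of_continuousOn
      (ContinuousOn.prodMk ?_ continuousOn_snd)).measurableSet
    exact h.contDiffOn_inv.continuousOn.comp (by fun_prop) hR
  have indicator_eq : S.indicator (planeWave W a v τ n)
      = indicator ((fun z : ℝ × ℝ => (X (n, z), z.2)) '' (Icc p q ×ˢ Icc r s))
        (planeWave W a v τ n) := by
    ext ξ
    by_cases hξ : ξ ∈ Function.support a
    · have := (haS ξ hξ).trans (h.mem_iff_mem_image_section hR (haO ξ hξ))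
      by_cases hS : ξ ∈ S
      · rw [indicator_of_mem hS, indicator_of_mem (this.1 hS)]
      · rw [indicator_of_notMem hS, indicator_of_notMem (mt this.2 hS)]
    · simp [indicator, planeWave, Function.notMem_support.1 hξ]
  rw [← integral_indicator hS, indicator_eq, integral_indicator measurable,
    h.integral_image_section hpq hrs hsub (continuousOn_planeWave
      (h.contDiffOn.continuousOn.comp (by fun_prop) fun ξ hξ => hξ) ha v τ)]
  refine intervalIntegral.integral_congr fun m hm => intervalIntegral.integral_congr fun y hy => ?_
  rw [uIcc_of_le hpq] at hm
  rw [uIcc_of_le hrs] at hy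
  exact h.smul_planeWave a v τ (hsub m hm y hy)

theorem IsLegendreChart.norm_setIntegral_planeWave_le (h : IsLegendreChart W X O V)
    {a : ℝ × ℝ → ℝ} (ha : Continuous a) {S : Set (ℝ × ℝ)} {m₁ m₂ y₁ y₂ : ℝ}
    (haO : ∀ ξ ∈ Function.support a, (n, ξ) ∈ O ∧ ∂x W (n, ξ) ∈ Icc m₁ m₂ ∧ ξ.2 ∈ Icc y₁ y₂)
    (hV : ∀ m ∈ Icc m₁ m₂, ∀ y ∈ Icc y₁ y₂, (n, m, y) ∈ V) (hS : MeasurableSet S)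
    {A₁ B₁ A₂ B₂ : ℝ} (haS : ∀ ξ ∈ Function.support a,
      ξ ∈ S ↔ ∂x W (n, ξ) ∈ Icc A₁ B₁ ∧ ξ.2 ∈ Icc A₂ B₂)
    {v : ℝ × ℝ} {τ D : ℝ} (hD : 0 ≤ D)
    (bound : ∀ p q r s : ℝ, p ≤ q → r ≤ s → Icc p q ⊆ Icc m₁ m₂ → Icc r s ⊆ Icc y₁ y₂ →
      ‖∫ m in p..q, fibreIntegral (legendre W X) (fun q => a (X q, q.2.2) * (|∂x X q| / ∂x X q)
        * ∂x (∂x (legendre W X)) q) v τ n r s m‖ ≤ D) :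
    ‖∫ ξ in S, planeWave W a v τ n ξ‖ ≤ D := by
  have haS' : ∀ ξ ∈ Function.support a, ξ ∈ S ↔
      ∂x W (n, ξ) ∈ Icc (A₁ ⊔ m₁) (B₁ ⊓ m₂) ∧ ξ.2 ∈ Icc (A₂ ⊔ y₁) (B₂ ⊓ y₂) := fun ξ hξ => by
    rw [haS ξ hξ, ← Icc_inter_Icc, ← Icc_inter_Icc, mem_inter_iff, mem_inter_iff]
    have := haO ξ hξ
    tauto
  by_cases hne : A₁ ⊔ m₁ ≤ B₁ ⊓ m₂ ∧ A₂ ⊔ y₁ ≤ B₂ ⊓ y₂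
  · have hm : Icc (A₁ ⊔ m₁) (B₁ ⊓ m₂) ⊆ Icc m₁ m₂ := Icc_subset_Icc le_sup_right inf_le_right
    have hy : Icc (A₂ ⊔ y₁) (B₂ ⊓ y₂) ⊆ Icc y₁ y₂ := Icc_subset_Icc le_sup_right inf_le_right
    rw [h.setIntegral_planeWave_eq ha (fun ξ hξ => (haO ξ hξ).1) hS haS' hne.1 hne.2
      fun m hm' y hy' => hV m (hm hm') y (hy hy')]
    exact bound _ _ _ _ hne.1 hne.2 hm hy
  · have zero : ∀ ξ ∈ S, planeWave W a v τ n ξ = 0 := fun ξ hξ => by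
      have haξ : a ξ = 0 := Function.notMem_support.1 fun hξa => hne <| by
        obtain ⟨h₁, h₂⟩ := (haS' ξ hξa).1 hξ
        exact ⟨h₁.1.trans h₁.2, h₂.1.trans h₂.2⟩
      simp [planeWave, haξ]
    rwa [setIntegral_eq_zero_of_forall_eq_zero zero, norm_zero]

theorem exists_mem_nhds_norm_setIntegral_planeWave_le [ProperSpace P] {U : Set (P × ℝ × ℝ)}
    {n₀ : P} {ξ₀ : ℝ × ℝ} (hU : IsOpen U) (hW : ContDiffOn ℝ ∞ W U) (hp₀ : (n₀, ξ₀) ∈ U)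
    (hxx : ∂x (∂x W) (n₀, ξ₀) ≠ 0) (k : ℕ) (hk : (levelDeriv W)^[k + 1] (∂y W) (n₀, ξ₀) ≠ 0) :
    ∃ B ∈ 𝓝 ξ₀, ∀ a : ℝ × ℝ → ℝ, ContDiff ℝ ∞ a → Function.support a ⊆ B →
      ∃ C ≥ 0, ∀ᶠ n in 𝓝 n₀, ∀ (S : Set (ℝ × ℝ)) (A₁ B₁ A₂ B₂ : ℝ), MeasurableSet S →
        (∀ ξ ∈ Function.support a, ξ ∈ S ↔ ∂x W (n, ξ) ∈ Icc A₁ B₁ ∧ ξ.2 ∈ Icc A₂ B₂) →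
        ∀ (v : ℝ × ℝ) (τ : ℝ), 1 ≤ τ →
          ‖∫ ξ in S, planeWave W a v τ n ξ‖ ≤ C * τ ^ (-(1 / 2 + 1 / (k + 2)) : ℝ) := by
  obtain ⟨X, O, V, hpO, -, h⟩ := exists_isLegendreChart hU hW hp₀ hxx
  have hq₀ : (n₀, ∂x W (n₀, ξ₀), ξ₀.2) ∈ V := h.mapsTo hpO
  have hXq₀ : fibreMap X (n₀, ∂x W (n₀, ξ₀), ξ₀.2) = (n₀, ξ₀) :=
    Prod.ext rfl (Prod.ext (h.left_inv _ hpO) rfl)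
  obtain ⟨K, hK, hKV, bound⟩ := exists_mem_nhds_norm_integral_fibreIntegral_le h.isOpen_target
    h.contDiffOn_legendre hq₀ k (by
      rw [h.iterate_dirDeriv_legendre_snd (k + 1) hq₀, hXq₀]
      exact neg_ne_zero.2 hk)
  obtain ⟨δ, hδ, hball⟩ := Metric.nhds_basis_closedBall.mem_iff.1 hK
  rw [← closedBall_prod_same, ← closedBall_prod_same, Real.closedBall_eq_Icc,
    Real.closedBall_eq_Icc] at hball
  have hnear : ∀ᶠ p in 𝓝 (n₀, ξ₀), p ∈ O ∧ ∂x W p ∈ Metric.closedBall (∂x W (n₀, ξ₀)) δ ∧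
      p.2.2 ∈ Metric.closedBall ξ₀.2 δ :=
    (h.isOpen_source.eventually_mem hpO).and (.and
      ((contDiffOn_dirDeriv _ h.isOpen_source h.contDiffOn).continuousOn.continuousAt
        (h.isOpen_source.mem_nhds hpO) (Metric.closedBall_mem_nhds _ hδ))
      ((continuous_snd.snd.tendsto _) (Metric.closedBall_mem_nhds ξ₀.2 hδ)))
  simp only [Real.closedBall_eq_Icc] at hnear
  obtain ⟨N₁, hN₁, B, hB, hprod⟩ := mem_nhds_prod_iff.1 hnear
  refine ⟨B, hB, fun a ha haB => ?_⟩
  obtain ⟨C, hC, bound⟩ := bound (fun q => a (X q, q.2.2) * (|∂x X q| / ∂x X q))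
    ((ha.comp_contDiffOn (h.contDiffOn_inv.prodMk contDiffOn_snd.snd)).mul h.contDiffOn_abs_div)
  refine ⟨C, hC, ?_⟩
  filter_upwards [hN₁, Metric.closedBall_mem_nhds n₀ hδ] with n hn hnδ S A₁ B₁ A₂ B₂ hS haS v τ hτ
  exact h.norm_setIntegral_planeWave_le ha.continuous
    (fun ξ hξ => hprod (mk_mem_prod hn (haB hξ)))
    (fun m hm y hy => hKV (hball ⟨hnδ, hm, hy⟩)) hS haS (by positivity)
    fun p q r s hpq hrs hm hy => bound v τ n p q r s hτ hpq hrs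
      fun m hm' y hy' => hball ⟨hnδ, hm hm', hy hy'⟩

end Local

/-! ### Local and uniform decay -/

section Decay

theorem exists_contDiff_sum_eq_one {E : Type*} [NormedAddCommGroup E] [NormedSpace ℝ E]
    [FiniteDimensional ℝ E] {K : Set E} (hK : IsCompact K) {U : E → Set E}
    (hU : ∀ x ∈ K, U x ∈ 𝓝 x) :
    ∃ t : Finset E, (∀ x ∈ t, x ∈ K) ∧ ∃ ρ : t → E → ℝ,
      (∀ x, ContDiff ℝ ∞ (ρ x) ∧ Function.support (ρ x) ⊆ U x) ∧ ∀ y ∈ K, ∑ x, ρ x y = 1 := by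
  obtain ⟨t, htK, hKt⟩ := hK.elim_nhds_subcover (fun x => interior (U x))
    fun x hx => interior_mem_nhds.2 (hU x hx)
  obtain ⟨ρ, hρ⟩ := SmoothPartitionOfUnity.exists_isSubordinate (modelWithCornersSelf ℝ E)
    hK.isClosed (fun x : t => interior (U x)) (fun _ => isOpen_interior)
    (by simpa only [iUnion_subtype] using hKt)
  refine ⟨t, htK, fun x => ρ x, fun x => ⟨(ρ x).contMDiff.contDiff, ?_⟩, fun y hy => ?_⟩
  · exact (subset_tsupport _).trans ((hρ x).trans interior_subset)
  · rw [← finsum_eq_sum_of_fintype, ρ.sum_eq_one hy]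

theorem planeWave_comp_equiv {P : Type*} (W : P × ℝ × ℝ → ℝ) (e : (ℝ × ℝ) ≃L[ℝ] ℝ × ℝ)
    (a : ℝ × ℝ → ℝ) (v : ℝ × ℝ) (τ : ℝ) (n : P) (ξ : ℝ × ℝ) :
    planeWave W a v τ n (e ξ) = planeWave (fun p => W (p.1, e p.2)) (fun ξ => a (e ξ))
      (v.1 * (e (1, 0)).1 + v.2 * (e (1, 0)).2, v.1 * (e (0, 1)).1 + v.2 * (e (0, 1)).2) τ n ξ := by
  have hξ : e ξ = ξ.1 • e (1, 0) + ξ.2 • e (0, 1) := by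
    rw [← map_smul, ← map_smul, ← map_add]
    simp
  have phase : v.1 * (e ξ).1 + v.2 * (e ξ).2
      = (v.1 * (e (1, 0)).1 + v.2 * (e (1, 0)).2) * ξ.1
        + (v.1 * (e (0, 1)).1 + v.2 * (e (0, 1)).2) * ξ.2 := by
    rw [hξ]
    simp only [Prod.fst_add, Prod.snd_add, Prod.smul_fst, Prod.smul_snd, smul_eq_mul]
    ring
  rw [planeWave, planeWave, phase]

variable {P : Type*} [TopologicalSpace P]

/-- Near `ξ₀`, and for `n` near `n₀`, the region `S n` is a rectangle in the coordinates
`(f, ξ.2)`. -/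
def IsLocallyBox (f : P × ℝ × ℝ → ℝ) (S : P → Set (ℝ × ℝ)) (n₀ : P) (ξ₀ : ℝ × ℝ) : Prop :=
  ∃ B ∈ 𝓝 ξ₀, ∀ᶠ n in 𝓝 n₀, ∃ A₁ B₁ A₂ B₂ : ℝ,
    ∀ ξ ∈ B, ξ ∈ S n ↔ f (n, ξ) ∈ Icc A₁ B₁ ∧ ξ.2 ∈ Icc A₂ B₂

/-- The oscillatory integrals over `S n` of plane waves with phase `v·ξ - W (n, ξ)` and amplitude
supported near `ξ₀` decay like `τ ^ (-σ)`, uniformly in `v` and in `n` near `n₀`. -/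
def HasLocalDecay (W : P × ℝ × ℝ → ℝ) (S : P → Set (ℝ × ℝ)) (σ : ℝ) (n₀ : P) (ξ₀ : ℝ × ℝ) : Prop :=
  ∃ B ∈ 𝓝 ξ₀, ∀ a : ℝ × ℝ → ℝ, ContDiff ℝ ∞ a → Function.support a ⊆ B →
    ∃ C, ∀ᶠ n in 𝓝 n₀, ∀ (v : ℝ × ℝ) (τ : ℝ), 1 ≤ τ →
      ‖∫ ξ in S n, planeWave W a v τ n ξ‖ ≤ C * τ ^ (-σ)

variable {W : P × ℝ × ℝ → ℝ} {S : P → Set (ℝ × ℝ)} {σ : ℝ} {n₀ : P} {ξ₀ : ℝ × ℝ}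

theorem isLocallyBox_of_eventually_mem {f : P × ℝ × ℝ → ℝ} (hf : ContinuousAt f (n₀, ξ₀))
    (hS : ∀ᶠ p in 𝓝 (n₀, ξ₀), p.2 ∈ S p.1) : IsLocallyBox f S n₀ ξ₀ := by
  have hnear : ∀ᶠ p in 𝓝 (n₀, ξ₀), p.2 ∈ S p.1 ∧ f p ∈ Metric.closedBall (f (n₀, ξ₀)) 1 ∧
      p.2.2 ∈ Metric.closedBall ξ₀.2 1 :=
    hS.and (.and (hf (Metric.closedBall_mem_nhds _ one_pos))
      ((continuous_snd.snd.tendsto _) (Metric.closedBall_mem_nhds ξ₀.2 one_pos)))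
  simp only [Real.closedBall_eq_Icc] at hnear
  obtain ⟨N₁, hN₁, B, hB, hprod⟩ := mem_nhds_prod_iff.1 hnear
  exact ⟨B, hB, mem_of_superset hN₁ fun n hn => ⟨_, _, _, _, fun ξ hξ =>
    iff_of_true (hprod (mk_mem_prod hn hξ)).1 (hprod (mk_mem_prod hn hξ)).2⟩⟩

theorem hasLocalDecay_of_eventually_notMem (hS : ∀ᶠ p in 𝓝 (n₀, ξ₀), p.2 ∉ S p.1) :
    HasLocalDecay W S σ n₀ ξ₀ := by
  obtain ⟨N₁, hN₁, B, hB, hprod⟩ := mem_nhds_prod_iff.1 hS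
  refine ⟨B, hB, fun a _ haB => ⟨0, mem_of_superset hN₁ fun n hn v τ _ => ?_⟩⟩
  rw [setIntegral_eq_zero_of_forall_eq_zero, norm_zero, zero_mul]
  intro ξ hξ
  rw [planeWave, Function.notMem_support.1 fun hξa => hprod (mk_mem_prod hn (haB hξa)) hξ,
    Complex.ofReal_zero, mul_zero]

theorem HasLocalDecay.of_comp_equiv (e : (ℝ × ℝ) ≃L[ℝ] ℝ × ℝ) (he : MeasurePreserving e)
    (h : HasLocalDecay (fun p => W (p.1, e p.2)) (fun n => e ⁻¹' S n) σ n₀ (e.symm ξ₀)) :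
    HasLocalDecay W S σ n₀ ξ₀ := by
  obtain ⟨B, hB, bound⟩ := h
  refine ⟨e.symm ⁻¹' B, e.symm.continuous.continuousAt hB, fun a ha haB => ?_⟩
  obtain ⟨C, bound⟩ := bound (fun ξ => a (e ξ)) (ha.comp e.contDiff) fun ξ hξ => by
    simpa using haB hξ
  refine ⟨C, bound.mono fun n bound v τ hτ => ?_⟩
  rw [← he.setIntegral_preimage_emb e.toHomeomorph.measurableEmbedding]
  simp only [planeWave_comp_equiv]
  exact bound _ τ hτ

theorem hasLocalDecay_of_iterate_levelDeriv_ne_zero {P : Type*} [NormedAddCommGroup P]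
    [NormedSpace ℝ P] [ProperSpace P] {W : P × ℝ × ℝ → ℝ} {U : Set (P × ℝ × ℝ)}
    {S : P → Set (ℝ × ℝ)} {n₀ : P} (hU : IsOpen U) (hW : ContDiffOn ℝ ∞ W U) (hp₀ : (n₀, ξ₀) ∈ U)
    (hxx : ∂x (∂x W) (n₀, ξ₀) ≠ 0) {k : ℕ} (hk : (levelDeriv W)^[k + 1] (∂y W) (n₀, ξ₀) ≠ 0)
    (hσ : σ ≤ 1 / 2 + 1 / (k + 2)) (hS : ∀ n, MeasurableSet (S n))
    (hbox : IsLocallyBox (∂x W) S n₀ ξ₀) : HasLocalDecay W S σ n₀ ξ₀ := by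
  obtain ⟨B, hB, hbox⟩ := hbox
  obtain ⟨B', hB', bound⟩ := exists_mem_nhds_norm_setIntegral_planeWave_le hU hW hp₀ hxx k hk
  refine ⟨B ∩ B', inter_mem hB hB', fun a ha haB => ?_⟩
  obtain ⟨C, hC, bound⟩ := bound a ha (haB.trans inter_subset_right)
  refine ⟨C, ?_⟩
  filter_upwards [hbox, bound] with n ⟨A₁, B₁, A₂, B₂, hn⟩ bound v τ hτ
  refine (bound (S n) A₁ B₁ A₂ B₂ (hS n) (fun ξ hξ => hn ξ (haB hξ).1) v τ hτ).trans ?_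
  gcongr

theorem HasLocalDecay.exists_eventually_norm_setIntegral_le
    (hW : ∀ n, Continuous fun ξ => W (n, ξ)) {η : ℝ × ℝ → ℝ} (hη : ContDiff ℝ ∞ η)
    (hηc : HasCompactSupport η) (h : ∀ ξ₀ ∈ tsupport η, HasLocalDecay W S σ n₀ ξ₀) :
    ∃ C, ∀ᶠ n in 𝓝 n₀, ∀ (v : ℝ × ℝ) (τ : ℝ), 1 ≤ τ →
      ‖∫ ξ in S n, planeWave W η v τ n ξ‖ ≤ C * τ ^ (-σ) := by
  choose! B hB bound using h
  obtain ⟨t, htη, ρ, hρ, hsum⟩ := exists_contDiff_sum_eq_one hηc hB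
  choose C bound using fun x : t => bound x (htη x x.2) (fun ξ => ρ x ξ * η ξ) ((hρ x).1.mul hη)
    ((Function.support_mul_subset_left _ _).trans (hρ x).2)
  refine ⟨∑ x, C x, ?_⟩
  filter_upwards [eventually_all.2 bound] with n bound v τ hτ
  have integrable : ∀ x, IntegrableOn (planeWave W (fun ξ => ρ x ξ * η ξ) v τ n) (S n) :=
    fun x => by
    refine (Continuous.integrable_of_hasCompactSupport ?_ ?_).integrableOn
    · exact continuousOn_univ.1 (continuousOn_planeWave (hW n).continuousOn
        ((hρ x).1.continuous.mul hη.continuous) v τ)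
    · exact ((hηc.mul_left).comp_left Complex.ofReal_zero).mul_left
  have hsplit : ∀ ξ, planeWave W η v τ n ξ = ∑ x, planeWave W (fun ξ => ρ x ξ * η ξ) v τ n ξ :=
    fun ξ => by
    have hηξ : ∑ x, ρ x ξ * η ξ = η ξ := by
      by_cases hξ : ξ ∈ tsupport η
      · rw [← Finset.sum_mul, hsum ξ hξ, one_mul]
      · simp [image_eq_zero_of_notMem_tsupport hξ]
    simp only [planeWave, ← Finset.mul_sum, ← Complex.ofReal_sum, hηξ]
  simp only [hsplit]
  rw [integral_finsetSum _ fun x _ => integrable x, Finset.sum_mul]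
  exact (norm_sum_le _ _).trans (Finset.sum_le_sum fun x _ => bound x v τ hτ)

theorem HasLocalDecay.exists_forall_norm_setIntegral_le
    (hW : ∀ n, Continuous fun ξ => W (n, ξ)) {η : ℝ × ℝ → ℝ} (hη : ContDiff ℝ ∞ η)
    (hηc : HasCompactSupport η) {I : Set P} (hI : IsCompact I)
    (h : ∀ n₀ ∈ I, ∀ ξ₀ ∈ tsupport η, HasLocalDecay W S σ n₀ ξ₀) :
    ∃ C, ∀ n ∈ I, ∀ (v : ℝ × ℝ) (τ : ℝ), 1 ≤ τ →
      ‖∫ ξ in S n, planeWave W η v τ n ξ‖ ≤ C * τ ^ (-σ) := by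
  refine hI.induction_on (p := fun I => ∃ C, ∀ n ∈ I, ∀ (v : ℝ × ℝ) (τ : ℝ), 1 ≤ τ →
    ‖∫ ξ in S n, planeWave W η v τ n ξ‖ ≤ C * τ ^ (-σ)) ⟨0, by simp⟩ ?_ ?_ fun n₀ hn₀ => ?_
  · exact fun s t hst ⟨C, hC⟩ => ⟨C, fun n hn => hC n (hst hn)⟩
  · rintro s t ⟨C, hC⟩ ⟨C', hC'⟩
    refine ⟨max C C', fun n hn v τ hτ => ?_⟩
    rcases hn with hn | hn
    · exact (hC n hn v τ hτ).trans (by gcongr; exact le_max_left _ _)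
    · exact (hC' n hn v τ hτ).trans (by gcongr; exact le_max_right _ _)
  · obtain ⟨C, hC⟩ := exists_eventually_norm_setIntegral_le hW hη hηc (h n₀ hn₀)
    exact ⟨_, mem_nhdsWithin_of_mem_nhds hC, C, fun n hn => hn⟩

end Decay

/-! ### Nondegeneracy along level curves -/

section LevelDeriv

variable {P : Type*} [NormedAddCommGroup P] [NormedSpace ℝ P] {W f g : P × ℝ × ℝ → ℝ}
  {O : Set (P × ℝ × ℝ)} {p : P × ℝ × ℝ}

theorem levelDeriv_congr (hO : IsOpen O) (h : EqOn f g O) (hp : p ∈ O) :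
    levelDeriv W f p = levelDeriv W g p := by
  rw [levelDeriv_eq_dirDeriv, dirDeriv_congr _ hO h hp, levelDeriv_eq_dirDeriv]

theorem levelDeriv_add (hf : DifferentiableAt ℝ f p) (hg : DifferentiableAt ℝ g p) :
    levelDeriv W (fun q => f q + g q) p = levelDeriv W f p + levelDeriv W g p := by
  simp only [levelDeriv_eq_dirDeriv, dirDeriv_add hf hg]

theorem levelDeriv_mul (hf : DifferentiableAt ℝ f p) (hg : DifferentiableAt ℝ g p) :
    levelDeriv W (fun q => f q * g q) p = levelDeriv W f p * g p + f p * levelDeriv W g p := by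
  simp only [levelDeriv_eq_dirDeriv, dirDeriv_mul hf hg]

theorem exists_iterate_levelDeriv_ne_zero (hO : IsOpen O) (hW : ContDiffOn ℝ ∞ W O)
    (hxx : ∀ q ∈ O, ∂x (∂x W) q ≠ 0) {c E d F : P × ℝ × ℝ → ℝ} (hc : ContDiffOn ℝ ∞ c O)
    (hE : ContDiffOn ℝ ∞ E O) (hd : ContDiffOn ℝ ∞ d O) (hF : ContDiffOn ℝ ∞ F O)
    (hc₀ : ∀ q ∈ O, c q ≠ 0) (hd₀ : ∀ q ∈ O, d q ≠ 0)
    (hf : EqOn (levelDeriv W f) (fun q => c q * E q) O)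
    (hEF : EqOn (levelDeriv W E) (fun q => d q * F q) O) (hp : p ∈ O)
    (h : E p ≠ 0 ∨ F p ≠ 0 ∨ levelDeriv W F p ≠ 0) :
    ∃ k ≤ 2, (levelDeriv W)^[k + 1] f p ≠ 0 := by
  have diff : ∀ {u}, ContDiffOn ℝ ∞ u O → ∀ {q}, q ∈ O → DifferentiableAt ℝ u q :=
    fun hu _ hq => differentiableAt_of_contDiffOn hO hu hq
  have smooth : ∀ {u}, ContDiffOn ℝ ∞ u O → ContDiffOn ℝ ∞ (levelDeriv W u) O :=
    contDiffOn_levelDeriv hO hW hxx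
  have second : EqOn (levelDeriv W (levelDeriv W f))
      (fun q => levelDeriv W c q * E q + c q * d q * F q) O := fun q hq => by
    rw [levelDeriv_congr hO hf hq, levelDeriv_mul (diff hc hq) (diff hE hq), hEF hq]
    ring
  by_cases hEp : E p = 0
  · by_cases hFp : F p = 0
    · have third : levelDeriv W (levelDeriv W (levelDeriv W f)) p
          = c p * d p * levelDeriv W F p := by
        rw [levelDeriv_congr hO second hp,
          levelDeriv_add (diff ((smooth hc).mul hE) hp) (diff ((hc.mul hd).mul hF) hp),
          levelDeriv_mul (diff (smooth hc) hp) (diff hE hp),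
          levelDeriv_mul (diff (hc.mul hd) hp) (diff hF hp), hEF hp, hEp]
        simp only [hFp, mul_zero, zero_add, add_zero]
      refine ⟨2, le_rfl, third.trans_ne ?_⟩
      exact mul_ne_zero (mul_ne_zero (hc₀ p hp) (hd₀ p hp)) (by tauto)
    · refine ⟨1, one_le_two, (second hp).trans_ne ?_⟩
      simpa only [hEp, mul_zero, zero_add] using mul_ne_zero (mul_ne_zero (hc₀ p hp) (hd₀ p hp)) hFp
  · exact ⟨0, zero_le_two, (hf hp).trans_ne (mul_ne_zero (hc₀ p hp) hEp)⟩

end LevelDeriv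

/-! ### The rescaled dispersion relation -/

section Symbol

theorem contDiff_sinc : ContDiff ℝ ∞ sinc := by
  have hdslope : Differentiable ℂ (dslope Complex.sin 0) := differentiableOn_univ.1
    ((Complex.differentiableOn_dslope univ_mem).2 Complex.differentiable_sin.differentiableOn)
  have sinc_eq : ∀ x : ℝ, sinc x = (dslope Complex.sin 0 x).re := fun x => by
    rcases eq_or_ne x 0 with rfl | hx
    · simp [dslope_same]
    · rw [sinc_of_ne_zero hx, dslope_of_ne _ (Complex.ofReal_ne_zero.2 hx), slope_def_field,
        Complex.sin_zero, sub_zero, sub_zero, ← Complex.ofReal_sin, ← Complex.ofReal_div,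
        Complex.ofReal_re]
  rw [funext sinc_eq]
  exact Complex.reCLM.contDiff.comp
    ((hdslope.contDiff.restrict_scalars ℝ).comp Complex.ofRealCLM.contDiff)

/-- The rescaled sine `sin (n * x) / n`, continued by `x` to `n = 0`. -/
noncomputable def scaledSin (n x : ℝ) : ℝ := x * sinc (n * x)

theorem scaledSin_zero_left (x : ℝ) : scaledSin 0 x = x := by
  rw [scaledSin, zero_mul, sinc_zero, mul_one]

theorem mul_scaledSin (n x : ℝ) : n * scaledSin n x = sin (n * x) := by
  rcases eq_or_ne (n * x) 0 with h | h
  · rw [scaledSin, ← mul_assoc, h, zero_mul, sin_zero]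
  · rw [scaledSin, ← mul_assoc, sinc_of_ne_zero h, mul_div_cancel₀ _ h]

theorem scaledSin_eq_half (n x : ℝ) :
    scaledSin n x = scaledSin (n / 2) x * cos (n / 2 * x) := by
  rcases eq_or_ne n 0 with rfl | hn
  · simp [scaledSin_zero_left]
  · refine mul_left_cancel₀ hn ?_
    rw [mul_scaledSin, show n * x = 2 * (n / 2 * x) by ring, sin_two_mul, ← mul_scaledSin (n / 2)]
    ring

theorem hasDerivAt_scaledSin (n x : ℝ) : HasDerivAt (scaledSin n) (cos (n * x)) x := by
  rcases eq_or_ne n 0 with rfl | hn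
  · rw [funext scaledSin_zero_left, zero_mul, cos_zero]
    exact hasDerivAt_id' x
  · have eq_div : scaledSin n = fun x => sin (n * x) / n :=
      funext fun x => eq_div_of_mul_eq hn (by rw [mul_comm, mul_scaledSin])
    rw [eq_div]
    refine ((((hasDerivAt_id x).const_mul n).sin).div_const n).congr_deriv ?_
    simp [hn]

theorem contDiff_scaledSin {E : Type*} [NormedAddCommGroup E] [NormedSpace ℝ E] {f g : E → ℝ}
    (hf : ContDiff ℝ ∞ f) (hg : ContDiff ℝ ∞ g) : ContDiff ℝ ∞ fun p => scaledSin (f p) (g p) :=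
  hg.mul (contDiff_sinc.comp (hf.mul hg))

/-- At lattice spacing `n` and frequency `ξ`, the rescaled symbol
`(sin² (n ξ₁ / 2) + sin² (n ξ₂ / 2)) / n²` of the discrete Laplacian; at `n = 0` it is `‖ξ‖² / 4`,
the symbol of the continuous one. -/
noncomputable def symbol (p : ℝ × ℝ × ℝ) : ℝ :=
  (scaledSin (p.1 / 2) p.2.1 / 2) ^ 2 + (scaledSin (p.1 / 2) p.2.2 / 2) ^ 2

/-- `sin (n ξ₁) / n`, continued to `n = 0`. -/
noncomputable def xSin (p : ℝ × ℝ × ℝ) : ℝ := scaledSin p.1 p.2.1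

/-- `sin (n ξ₂) / n`, continued to `n = 0`. -/
noncomputable def ySin (p : ℝ × ℝ × ℝ) : ℝ := scaledSin p.1 p.2.2

/-- `cos (n ξ₁)`. -/
noncomputable def xCos (p : ℝ × ℝ × ℝ) : ℝ := cos (p.1 * p.2.1)

/-- `cos (n ξ₂)`. -/
noncomputable def yCos (p : ℝ × ℝ × ℝ) : ℝ := cos (p.1 * p.2.2)

@[fun_prop] theorem contDiff_symbol : ContDiff ℝ ∞ symbol :=
  (((contDiff_scaledSin (by fun_prop) (by fun_prop)).div_const 2).pow 2).add
    (((contDiff_scaledSin (by fun_prop) (by fun_prop)).div_const 2).pow 2)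

@[fun_prop] theorem contDiff_xSin : ContDiff ℝ ∞ xSin :=
  contDiff_scaledSin (by fun_prop) (by fun_prop)

@[fun_prop] theorem contDiff_ySin : ContDiff ℝ ∞ ySin :=
  contDiff_scaledSin (by fun_prop) (by fun_prop)

@[fun_prop] theorem contDiff_xCos : ContDiff ℝ ∞ xCos := by unfold xCos; fun_prop

@[fun_prop] theorem contDiff_yCos : ContDiff ℝ ∞ yCos := by unfold yCos; fun_prop

@[fun_prop] theorem differentiableAt_symbol (p : ℝ × ℝ × ℝ) : DifferentiableAt ℝ symbol p :=
  contDiff_symbol.differentiable (by simp) p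

@[fun_prop] theorem differentiableAt_xSin (p : ℝ × ℝ × ℝ) : DifferentiableAt ℝ xSin p :=
  contDiff_xSin.differentiable (by simp) p

@[fun_prop] theorem differentiableAt_ySin (p : ℝ × ℝ × ℝ) : DifferentiableAt ℝ ySin p :=
  contDiff_ySin.differentiable (by simp) p

@[fun_prop] theorem differentiableAt_xCos (p : ℝ × ℝ × ℝ) : DifferentiableAt ℝ xCos p :=
  contDiff_xCos.differentiable (by simp) p

@[fun_prop] theorem differentiableAt_yCos (p : ℝ × ℝ × ℝ) : DifferentiableAt ℝ yCos p :=
  contDiff_yCos.differentiable (by simp) p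

theorem xCos_sq (p : ℝ × ℝ × ℝ) : xCos p ^ 2 = 1 - p.1 ^ 2 * xSin p ^ 2 := by
  rw [xCos, xSin, cos_sq', ← mul_pow, mul_scaledSin]

theorem yCos_sq (p : ℝ × ℝ × ℝ) : yCos p ^ 2 = 1 - p.1 ^ 2 * ySin p ^ 2 := by
  rw [yCos, ySin, cos_sq', ← mul_pow, mul_scaledSin]

theorem sq_mul_symbol (p : ℝ × ℝ × ℝ) : 2 * p.1 ^ 2 * symbol p = 2 - xCos p - yCos p := by
  have half : ∀ x, (p.1 * scaledSin (p.1 / 2) x) ^ 2 = 2 - 2 * cos (p.1 * x) := fun x => by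
    rw [show p.1 * scaledSin (p.1 / 2) x = 2 * (p.1 / 2 * scaledSin (p.1 / 2) x) by ring,
      mul_scaledSin, mul_pow, sin_sq_eq_half_sub, show 2 * (p.1 / 2 * x) = p.1 * x by ring]
    ring
  rw [symbol, xCos, yCos]
  linear_combination half p.2.1 / 2 + half p.2.2 / 2

theorem symbol_of_fst_eq_zero {p : ℝ × ℝ × ℝ} (hp : p.1 = 0) :
    4 * symbol p = xSin p ^ 2 + ySin p ^ 2 := by
  rw [symbol, xSin, ySin, hp, zero_div, scaledSin_zero_left, scaledSin_zero_left]
  ring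

theorem dirDeriv_xSin (u v : ℝ) (p : ℝ × ℝ × ℝ) : dirDeriv (0, u, v) xSin p = u * xCos p := by
  rw [dirDeriv_eq_of_hasDerivAt (by fun_prop) (hasDerivAt_scaledSin p.1 p.2.1)
    (hasDerivAt_const p.2.2 (xSin p)), mul_zero, add_zero, xCos]

theorem dirDeriv_ySin (u v : ℝ) (p : ℝ × ℝ × ℝ) : dirDeriv (0, u, v) ySin p = v * yCos p := by
  rw [dirDeriv_eq_of_hasDerivAt (by fun_prop) (hasDerivAt_const p.2.1 (ySin p))
    (hasDerivAt_scaledSin p.1 p.2.2), mul_zero, zero_add, yCos]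

theorem hasDerivAt_cos_mul (n x : ℝ) :
    HasDerivAt (fun x => cos (n * x)) (-(n ^ 2 * scaledSin n x)) x :=
  ((hasDerivAt_id x).const_mul n).cos.congr_deriv (by
    rw [id, mul_one, ← mul_scaledSin]
    ring)

theorem dirDeriv_xCos (u v : ℝ) (p : ℝ × ℝ × ℝ) :
    dirDeriv (0, u, v) xCos p = -(u * p.1 ^ 2 * xSin p) := by
  rw [dirDeriv_eq_of_hasDerivAt (by fun_prop) (hasDerivAt_cos_mul p.1 p.2.1)
    (hasDerivAt_const p.2.2 (xCos p)), xSin]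
  ring

theorem dirDeriv_yCos (u v : ℝ) (p : ℝ × ℝ × ℝ) :
    dirDeriv (0, u, v) yCos p = -(v * p.1 ^ 2 * ySin p) := by
  rw [dirDeriv_eq_of_hasDerivAt (by fun_prop) (hasDerivAt_const p.2.1 (yCos p))
    (hasDerivAt_cos_mul p.1 p.2.2), ySin]
  ring

theorem hasDerivAt_scaledSin_half_sq (n x : ℝ) :
    HasDerivAt (fun x => (scaledSin (n / 2) x / 2) ^ 2) (scaledSin n x / 2) x :=
  (((hasDerivAt_scaledSin (n / 2) x).div_const 2).pow 2).congr_deriv (by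
    rw [scaledSin_eq_half n]
    ring)

theorem dirDeriv_symbol (u v : ℝ) (p : ℝ × ℝ × ℝ) :
    dirDeriv (0, u, v) symbol p = (u * xSin p + v * ySin p) / 2 := by
  rw [dirDeriv_eq_of_hasDerivAt (by fun_prop)
    ((hasDerivAt_scaledSin_half_sq p.1 p.2.1).add_const ((scaledSin (p.1 / 2) p.2.2 / 2) ^ 2))
    ((hasDerivAt_scaledSin_half_sq p.1 p.2.2).const_add ((scaledSin (p.1 / 2) p.2.1 / 2) ^ 2)),
    xSin, ySin]
  ring

theorem dirDeriv_fst (u v : ℝ) (p : ℝ × ℝ × ℝ) :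
    dirDeriv (0, u, v) (fun q : ℝ × ℝ × ℝ => q.1) p = 0 := by
  rw [dirDeriv, fderiv_fst, ContinuousLinearMap.coe_fst']

/-- The dispersion relation `symbol ^ a` of the rescaled fractional Laplacian of order `2 * a`. -/
noncomputable def dispersion (a : ℝ) (p : ℝ × ℝ × ℝ) : ℝ := symbol p ^ a

theorem isOpen_symbol_pos : IsOpen {p | 0 < symbol p} :=
  isOpen_lt continuous_const contDiff_symbol.continuous

theorem contDiffOn_dispersion (a : ℝ) : ContDiffOn ℝ ∞ (dispersion a) {p | 0 < symbol p} :=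
  fun _ hp => (contDiff_symbol.contDiffAt.rpow_const_of_ne (ne_of_gt hp)).contDiffWithinAt

/-- The pure second derivative `∂₁²` of `dispersion a`, divided by `a * symbol ^ (a - 2) / 4`. -/
noncomputable def curvatureX (a : ℝ) (p : ℝ × ℝ × ℝ) : ℝ :=
  (a - 1) * xSin p ^ 2 + 2 * symbol p * xCos p

/-- The pure second derivative `∂₂²` of `dispersion a`, divided by `a * symbol ^ (a - 2) / 4`. -/
noncomputable def curvatureY (a : ℝ) (p : ℝ × ℝ × ℝ) : ℝ :=
  (a - 1) * ySin p ^ 2 + 2 * symbol p * yCos p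

/-- The Hessian determinant of `dispersion a` in `ξ`, divided by `a ^ 2 * symbol ^ (2 * a - 3) / 8`;
its zero set is the degeneracy set. -/
noncomputable def hessianDet (a : ℝ) (p : ℝ × ℝ × ℝ) : ℝ :=
  (a - 1) * (xSin p ^ 2 * yCos p + ySin p ^ 2 * xCos p) + 2 * symbol p * xCos p * yCos p

/-- The derivative `∂₁` of `hessianDet a`, divided by `xSin`. -/
noncomputable def detSlopeX (a : ℝ) (p : ℝ × ℝ × ℝ) : ℝ :=
  (2 * a - 1) * xCos p * yCos p - (a - 1) * p.1 ^ 2 * ySin p ^ 2 - 2 * symbol p * p.1 ^ 2 * yCos p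

/-- The derivative `∂₂` of `hessianDet a`, divided by `ySin`. -/
noncomputable def detSlopeY (a : ℝ) (p : ℝ × ℝ × ℝ) : ℝ :=
  (2 * a - 1) * xCos p * yCos p - (a - 1) * p.1 ^ 2 * xSin p ^ 2 - 2 * symbol p * p.1 ^ 2 * xCos p

/-- The derivative of `hessianDet a` along the level curves of `∂₁ (dispersion a)`, multiplied by
`curvatureX a`. -/
noncomputable def levelDerivDet (a : ℝ) (p : ℝ × ℝ × ℝ) : ℝ :=
  ySin p * (curvatureX a p * detSlopeY a p - (a - 1) * xSin p ^ 2 * detSlopeX a p)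

@[fun_prop] theorem contDiff_curvatureX (a : ℝ) : ContDiff ℝ ∞ (curvatureX a) := by
  unfold curvatureX; fun_prop

@[fun_prop] theorem contDiff_hessianDet (a : ℝ) : ContDiff ℝ ∞ (hessianDet a) := by
  unfold hessianDet; fun_prop

@[fun_prop] theorem contDiff_levelDerivDet (a : ℝ) : ContDiff ℝ ∞ (levelDerivDet a) := by
  unfold levelDerivDet detSlopeX detSlopeY; fun_prop

section Calculus

variable {a : ℝ} {p : ℝ × ℝ × ℝ}

theorem dirDeriv_dispersion (hp : 0 < symbol p) (u v : ℝ) :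
    dirDeriv (0, u, v) (dispersion a) p
      = a * symbol p ^ (a - 1) * ((u * xSin p + v * ySin p) / 2) := by
  unfold dispersion
  rw [dirDeriv_rpow_const (by fun_prop) hp.ne', dirDeriv_symbol]

theorem dirDeriv_dirDeriv_dispersion (hp : 0 < symbol p) (u v u' v' : ℝ) :
    dirDeriv (0, u', v') (dirDeriv (0, u, v) (dispersion a)) p
      = a * symbol p ^ (a - 2) / 4 * (u * u' * curvatureX a p
        + (u * v' + v * u') * ((a - 1) * xSin p * ySin p) + v * v' * curvatureY a p) := by
  have hpow : symbol p ^ (a - 1) = symbol p ^ (a - 2) * symbol p := by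
    rw [← rpow_add_one hp.ne']
    ring_nf
  have hpow' : DifferentiableAt ℝ (fun q => symbol q ^ (a - 1)) p :=
    (differentiableAt_symbol p).rpow_const (.inl hp.ne')
  rw [dirDeriv_congr _ isOpen_symbol_pos (fun q hq => dirDeriv_dispersion hq u v) hp]
  simp (disch := fun_prop) only [div_eq_mul_inv, dirDeriv_add, dirDeriv_mul, dirDeriv_const,
    dirDeriv_rpow_const _ hp.ne', dirDeriv_symbol, dirDeriv_xSin, dirDeriv_ySin, hpow]
  rw [show a - 1 - 1 = a - 2 by ring, curvatureX, curvatureY]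
  ring

theorem levelSlope_dispersion (ha : a ≠ 0) (hp : 0 < symbol p) :
    levelSlope (dispersion a) p = -((a - 1) * xSin p * ySin p) / curvatureX a p := by
  have hne : a * symbol p ^ (a - 2) / 4 ≠ 0 := by positivity
  rw [levelSlope, dirDeriv_dirDeriv_dispersion hp, dirDeriv_dirDeriv_dispersion hp,
    ← mul_neg, mul_div_mul_left _ _ hne]
  ring_nf

theorem levelDeriv_dirDeriv_dispersion (ha : a ≠ 0) (hp : 0 < symbol p)
    (hH : curvatureX a p ≠ 0) :
    levelDeriv (dispersion a) (∂y (dispersion a)) p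
      = a * symbol p ^ (a - 1) / (2 * curvatureX a p) * hessianDet a p := by
  have hpow : symbol p ^ (a - 1) = symbol p ^ (a - 2) * symbol p := by
    rw [← rpow_add_one hp.ne']
    ring_nf
  have det : curvatureX a p * curvatureY a p - ((a - 1) * xSin p * ySin p) ^ 2
      = 2 * symbol p * hessianDet a p := by
    rw [curvatureX, curvatureY, hessianDet]
    ring
  rw [levelDeriv_eq_dirDeriv, dirDeriv_dirDeriv_dispersion hp, levelSlope_dispersion ha hp, hpow]
  field_simp
  linear_combination 2 * det

theorem dirDeriv_hessianDet (u v : ℝ) :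
    dirDeriv (0, u, v) (hessianDet a) p
      = u * (xSin p * detSlopeX a p) + v * (ySin p * detSlopeY a p) := by
  unfold hessianDet
  simp (disch := fun_prop) only [dirDeriv_add, dirDeriv_mul, dirDeriv_pow, dirDeriv_const,
    dirDeriv_symbol, dirDeriv_xSin, dirDeriv_ySin, dirDeriv_xCos, dirDeriv_yCos]
  rw [detSlopeX, detSlopeY]
  ring

theorem levelDeriv_hessianDet (ha : a ≠ 0) (hp : 0 < symbol p) (hH : curvatureX a p ≠ 0) :
    levelDeriv (dispersion a) (hessianDet a) p = 1 / curvatureX a p * levelDerivDet a p := by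
  rw [levelDeriv_eq_dirDeriv, dirDeriv_hessianDet, levelSlope_dispersion ha hp, levelDerivDet]
  field_simp
  ring

theorem levelDeriv_levelDerivDet_of_cusp (ha : a ≠ 0) (hp : 0 < symbol p)
    (hH : curvatureX a p ≠ 0) (hx : xCos p = 0) (hy : yCos p = 0) :
    levelDeriv (dispersion a) (levelDerivDet a) p = -6 * (a - 1) * ySin p ^ 2 := by
  have hH' : curvatureX a p = (a - 1) * xSin p ^ 2 := by rw [curvatureX, hx]; ring
  have slope : levelSlope (dispersion a) p * xSin p = -ySin p := by
    rw [levelSlope_dispersion ha hp, hH']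
    rw [hH'] at hH
    have : a - 1 ≠ 0 := left_ne_zero_of_mul hH
    have : xSin p ≠ 0 := pow_ne_zero_iff two_ne_zero |>.1 (right_ne_zero_of_mul hH)
    field_simp
  have hg : p.1 ^ 2 * symbol p = 1 := by linear_combination sq_mul_symbol p / 2 - (hx + hy) / 2
  have hs : p.1 ^ 2 * xSin p ^ 2 = 1 := by linear_combination xCos_sq p - xCos p * hx
  have hgs : xSin p ^ 2 * symbol p * p.1 ^ 4 = 1 := by
    linear_combination p.1 ^ 2 * symbol p * hs + hg
  rw [levelDeriv_eq_dirDeriv]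
  generalize levelSlope (dispersion a) p = κ at slope
  unfold levelDerivDet curvatureX detSlopeX detSlopeY
  simp (disch := fun_prop) only [sub_eq_add_neg, ← neg_one_mul (_ * _ : ℝ), dirDeriv_add,
    dirDeriv_mul, dirDeriv_pow, dirDeriv_const, dirDeriv_symbol, dirDeriv_xSin, dirDeriv_ySin,
    dirDeriv_xCos, dirDeriv_yCos, dirDeriv_fst, hx, hy]
  linear_combination (1 - a) * (6 * ySin p ^ 2 * hgs
    - 4 * (xSin p ^ 2 * symbol p * p.1 ^ 4) * ySin p * slope)

end Calculus

theorem abs_mul_le_one {x y : ℝ} (hx : x ∈ Icc (-1) 1) (hy : y ∈ Icc (-1) 1) : |x * y| ≤ 1 :=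
  (abs_mul x y).trans_le (mul_le_one₀ (abs_le.2 hx) (abs_nonneg y) (abs_le.2 hy))

theorem cosPoly_factor_pos {x y : ℝ} (hx : x ∈ Icc (-1) 1) (hy : y ∈ Icc (-1) 1) (hs : x + y < 2)
    (h0 : x * y ≠ 0) (h1 : x * y < 1) :
    0 < (2 - x - y) * (x - y) ^ 2 + 2 * (x * y) * (1 - x * y) * ((1 - x) * (1 - y)) := by
  have hd : 0 < 2 - x - y := by linarith
  have hx' : 0 ≤ 1 - x := by linarith [hx.2]
  have hy' : 0 ≤ 1 - y := by linarith [hy.2]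
  have hxy : 0 < 1 - x * y := by linarith
  rcases lt_or_gt_of_ne h0 with neg | pos
  · have hneg : 0 < -(x * y) := by linarith
    have hge : 0 ≤ 1 + x * y := by linarith [neg_le_of_abs_le (abs_mul_le_one hx hy)]
    calc 0 < (2 - x - y) * ((x + y) ^ 2 + 2 * -(x * y) * (1 + x * y))
          + 2 * -(x * y) * (1 - x * y) ^ 2 := by positivity
      _ = _ := by ring
  · rcases eq_or_ne x y with rfl | hne
    · have : 0 < 1 - x := by linarith
      positivity
    · have : x - y ≠ 0 := sub_ne_zero.2 hne
      positivity

/- With `b = 1 - a`, `x = xCos p` and `y = yCos p`, the left-hand side of the conclusion is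
`-p.1 ^ 2 * levelDerivDet a p / ySin p`, and `hdet` is the vanishing of `hessianDet a p`. -/
theorem cosPoly_ne_zero {x y b : ℝ} (hx : x ∈ Icc (-1) 1) (hy : y ∈ Icc (-1) 1)
    (hs : x + y < 2) (h0 : x * y ≠ 0)
    (hdet : x * y * (2 - x - y) = b * (x + y) * (1 - x * y)) :
    ((2 - x - y) * x - b * (1 - x ^ 2))
        * (x * (2 - x - y) - x * y - b * (1 - x * y) + b * (x + y) * x)
      + b * (1 - x ^ 2) * (y * (2 - x - y) - x * y - b * (1 - x * y) + b * (x + y) * y) ≠ 0 := by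
  have hd : 2 - x - y ≠ 0 := by linarith
  have rhs_ne : b * (x + y) * (1 - x * y) ≠ 0 := hdet ▸ mul_ne_zero h0 hd
  have hsum : x + y ≠ 0 := right_ne_zero_of_mul (left_ne_zero_of_mul rhs_ne)
  have hxy : 1 - x * y ≠ 0 := right_ne_zero_of_mul rhs_ne
  have hxy' : x * y < 1 :=
    (le_of_abs_le (abs_mul_le_one hx hy)).lt_of_ne (sub_ne_zero.1 hxy).symm
  obtain rfl : b = x * y * (2 - x - y) / ((x + y) * (1 - x * y)) := by
    rw [hdet]
    field_simp
  have ne_zero_of_factor : ∀ P : ℝ, P * ((x + y) * (1 - x * y)) ^ 2 = (2 - x - y) * x * (x + y)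
      * ((2 - x - y) * (x - y) ^ 2 + 2 * (x * y) * (1 - x * y) * ((1 - x) * (1 - y))) → P ≠ 0 :=
    fun P hP => left_ne_zero_of_mul <| hP ▸ mul_ne_zero
      (mul_ne_zero (mul_ne_zero hd (left_ne_zero_of_mul h0)) hsum)
      (cosPoly_factor_pos hx hy hs h0 hxy').ne'
  apply ne_zero_of_factor
  field_simp
  ring

section Nondegeneracy

variable {a : ℝ} {p : ℝ × ℝ × ℝ}

theorem hessianDet_ne_zero_of_fst_eq_zero (ha : a ≠ 1 / 2) (hp : 0 < symbol p) (hn : p.1 = 0) :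
    hessianDet a p ≠ 0 := by
  have hx : xCos p = 1 := by rw [xCos, hn, zero_mul, cos_zero]
  have hy : yCos p = 1 := by rw [yCos, hn, zero_mul, cos_zero]
  have : hessianDet a p = 4 * (a - 1 / 2) * symbol p := by
    rw [hessianDet, hx, hy]
    linear_combination -(a - 1) * symbol_of_fst_eq_zero hn
  rw [this]
  exact mul_ne_zero (mul_ne_zero four_ne_zero (sub_ne_zero.2 ha)) hp.ne'

theorem hessianDet_ne_zero_of_ySin_eq_zero (hH : curvatureX a p ≠ 0) (hy : ySin p = 0) :
    hessianDet a p ≠ 0 := by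
  have hyc : yCos p ^ 2 = 1 := by rw [yCos_sq, hy]; ring
  have : hessianDet a p = yCos p * curvatureX a p := by rw [hessianDet, curvatureX, hy]; ring
  rw [this]
  exact mul_ne_zero (pow_ne_zero_iff two_ne_zero |>.1 (hyc ▸ one_ne_zero)) hH

theorem sq_mul_hessianDet (a : ℝ) (p : ℝ × ℝ × ℝ) :
    p.1 ^ 2 * hessianDet a p = xCos p * yCos p * (2 - xCos p - yCos p)
      - (1 - a) * (xCos p + yCos p) * (1 - xCos p * yCos p) := by
  rw [hessianDet]
  linear_combination xCos p * yCos p * sq_mul_symbol p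
    + (a - 1) * yCos p * xCos_sq p + (a - 1) * xCos p * yCos_sq p

theorem levelDerivDet_ne_zero (hp : 0 < symbol p) (hn : p.1 ≠ 0) (hy : ySin p ≠ 0)
    (hxy : xCos p * yCos p ≠ 0) (hE : hessianDet a p = 0) : levelDerivDet a p ≠ 0 := by
  have hs : xCos p + yCos p < 2 := by
    have : 0 < 2 * p.1 ^ 2 * symbol p := by positivity
    linarith [sq_mul_symbol p]
  have hdet := sq_mul_hessianDet a p
  rw [hE, mul_zero] at hdet
  have hpoly := cosPoly_ne_zero (x := xCos p) (y := yCos p) (cos_mem_Icc _)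
    (cos_mem_Icc _) hs hxy (sub_eq_zero.1 hdet.symm)
  refine mul_ne_zero hy fun h => hpoly ?_
  have hX : p.1 ^ 2 * curvatureX a p = (2 - xCos p - yCos p) * xCos p
      - (1 - a) * (1 - xCos p ^ 2) := by
    rw [curvatureX]
    linear_combination xCos p * sq_mul_symbol p + (a - 1) * xCos_sq p
  have hdX : -detSlopeX a p = yCos p * (2 - xCos p - yCos p) - xCos p * yCos p
      - (1 - a) * (1 - xCos p * yCos p) + (1 - a) * (xCos p + yCos p) * yCos p := by
    rw [detSlopeX]
    linear_combination yCos p * sq_mul_symbol p - (1 - a) * yCos_sq p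
  have hdY : -detSlopeY a p = xCos p * (2 - xCos p - yCos p) - xCos p * yCos p
      - (1 - a) * (1 - xCos p * yCos p) + (1 - a) * (xCos p + yCos p) * xCos p := by
    rw [detSlopeY]
    linear_combination xCos p * sq_mul_symbol p - (1 - a) * xCos_sq p
  rw [← hX, ← hdX, ← hdY]
  linear_combination -p.1 ^ 2 * h + (1 - a) * detSlopeX a p * xCos_sq p

theorem xCos_eq_zero_and_yCos_eq_zero (ha : a ≠ 1) (hxy : xCos p * yCos p = 0)
    (hE : hessianDet a p = 0) : xCos p = 0 ∧ yCos p = 0 := by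
  have hdet := sq_mul_hessianDet a p
  rw [hE, hxy] at hdet
  have hsum : xCos p + yCos p = 0 :=
    (mul_eq_zero.1 (by linear_combination hdet)).resolve_left (sub_ne_zero.2 ha.symm)
  rcases mul_eq_zero.1 hxy with h | h
  · exact ⟨h, by linarith⟩
  · exact ⟨by linarith, h⟩

theorem levelDeriv_levelDerivDet_ne_zero_of_cusp (ha₀ : a ≠ 0) (ha₁ : a ≠ 1) (hp : 0 < symbol p)
    (hH : curvatureX a p ≠ 0) (hx : xCos p = 0) (hy : yCos p = 0) :
    levelDeriv (dispersion a) (levelDerivDet a) p ≠ 0 := by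
  have hs : ySin p ≠ 0 := fun h => by
    have := yCos_sq p
    norm_num [h, hy] at this
  rw [levelDeriv_levelDerivDet_of_cusp ha₀ hp hH hx hy]
  exact mul_ne_zero (mul_ne_zero (by norm_num) (sub_ne_zero.2 ha₁)) (pow_ne_zero 2 hs)

theorem hessianDet_or_levelDeriv_ne_zero (ha₀ : a ≠ 0) (ha : a ≠ 1 / 2) (ha₁ : a ≠ 1)
    (hp : 0 < symbol p) (hH : curvatureX a p ≠ 0) :
    hessianDet a p ≠ 0 ∨ levelDerivDet a p ≠ 0
      ∨ levelDeriv (dispersion a) (levelDerivDet a) p ≠ 0 := by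
  by_cases hE : hessianDet a p = 0
  · have hn : p.1 ≠ 0 := fun hn => hessianDet_ne_zero_of_fst_eq_zero ha hp hn hE
    have hy : ySin p ≠ 0 := fun hy => hessianDet_ne_zero_of_ySin_eq_zero hH hy hE
    by_cases hxy : xCos p * yCos p = 0
    · obtain ⟨hx, hy⟩ := xCos_eq_zero_and_yCos_eq_zero ha₁ hxy hE
      exact .inr (.inr (levelDeriv_levelDerivDet_ne_zero_of_cusp ha₀ ha₁ hp hH hx hy))
    · exact .inr (.inl (levelDerivDet_ne_zero hp hn hy hxy hE))
  · exact .inl hE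

theorem dirDeriv_dirDeriv_dispersion_ne_zero (ha : a ≠ 0) (hp : 0 < symbol p)
    (hH : curvatureX a p ≠ 0) : ∂x (∂x (dispersion a)) p ≠ 0 := by
  rw [dirDeriv_dirDeriv_dispersion hp]
  have : a * symbol p ^ (a - 2) / 4 ≠ 0 := by positivity
  simpa [this] using hH

theorem exists_iterate_levelDeriv_dispersion_ne_zero (ha₀ : a ≠ 0) (ha : a ≠ 1 / 2) (ha₁ : a ≠ 1)
    (hp : 0 < symbol p) (hH : curvatureX a p ≠ 0) :
    ∃ k ≤ 2, (levelDeriv (dispersion a))^[k + 1] (∂y (dispersion a)) p ≠ 0 := by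
  let O := {q | 0 < symbol q} ∩ {q | curvatureX a q ≠ 0}
  have hO : IsOpen O := isOpen_symbol_pos.inter
    (isOpen_ne_fun (contDiff_curvatureX a).continuous continuous_const)
  have hcurv : ContDiffOn ℝ ∞ (curvatureX a) O := (contDiff_curvatureX a).contDiffOn
  have hcoeff : ContDiffOn ℝ ∞ (fun q => a * symbol q ^ (a - 1) / (2 * curvatureX a q)) O :=
    (contDiffOn_const.mul ((contDiffOn_dispersion (a - 1)).mono inter_subset_left)).div
      (contDiffOn_const.mul hcurv) fun q hq => mul_ne_zero two_ne_zero hq.2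
  have hcoeff_ne : ∀ q ∈ O, a * symbol q ^ (a - 1) / (2 * curvatureX a q) ≠ 0 := fun q hq =>
    div_ne_zero (mul_ne_zero ha₀ (rpow_pos_of_pos hq.1 _).ne') (mul_ne_zero two_ne_zero hq.2)
  exact exists_iterate_levelDeriv_ne_zero hO ((contDiffOn_dispersion a).mono inter_subset_left)
    (fun q hq => dirDeriv_dirDeriv_dispersion_ne_zero ha₀ hq.1 hq.2) hcoeff
    (contDiff_hessianDet a).contDiffOn (contDiffOn_const.div hcurv fun q hq => hq.2)
    (contDiff_levelDerivDet a).contDiffOn hcoeff_ne (fun q hq => one_div_ne_zero hq.2)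
    (fun q hq => levelDeriv_dirDeriv_dispersion ha₀ hq.1 hq.2)
    (fun q hq => levelDeriv_hessianDet ha₀ hq.1 hq.2) ⟨hp, hH⟩
    (hessianDet_or_levelDeriv_ne_zero ha₀ ha ha₁ hp hH)

end Nondegeneracy

end Symbol

/-! ### The Brillouin zone -/

section BrillouinZone

theorem sinc_abs (t : ℝ) : sinc |t| = sinc t := by
  rcases abs_choice t with h | h <;> rw [h]
  exact sinc_neg t

theorem sinc_pos {t : ℝ} (ht : |t| < π) : 0 < sinc t := by
  rcases eq_or_ne t 0 with rfl | h
  · rw [sinc_zero]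
    exact one_pos
  · rw [← sinc_abs, sinc_of_ne_zero (abs_ne_zero.2 h)]
    exact div_pos (sin_pos_of_pos_of_lt_pi (abs_pos.2 h) ht) (abs_pos.2 h)

theorem sinc_nonneg_iff {t : ℝ} (ht : |t| < 2 * π) : 0 ≤ sinc t ↔ |t| ≤ π := by
  rcases eq_or_ne t 0 with rfl | h
  · simp [pi_nonneg]
  rw [← sinc_abs, sinc_of_ne_zero (abs_ne_zero.2 h), le_div_iff₀ (abs_pos.2 h), zero_mul]
  refine ⟨fun hsin => ?_, sin_nonneg_of_nonneg_of_le_pi (abs_nonneg t)⟩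
  contrapose! hsin
  rw [← sin_sub_two_pi]
  exact sin_neg_of_neg_of_neg_pi_lt (by linarith) (by linarith)

/-- The fundamental cell `‖n ξ‖_∞ ≤ π` of the frequency space dual to the lattice `n ℤ²`. -/
def brillouinZone (n : ℝ) : Set (ℝ × ℝ) := {ξ | |n * ξ.1| ≤ π ∧ |n * ξ.2| ≤ π}

theorem isClosed_setOf_mem_brillouinZone :
    IsClosed {p : ℝ × ℝ × ℝ | p.2 ∈ brillouinZone p.1} := by
  simp only [brillouinZone, ofPred_and]
  exact (isClosed_le (by fun_prop) continuous_const).inter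
    (isClosed_le (by fun_prop) continuous_const)

theorem measurableSet_brillouinZone (n : ℝ) : MeasurableSet (brillouinZone n) :=
  (isClosed_setOf_mem_brillouinZone.preimage (Continuous.prodMk_right n)).measurableSet

theorem scaledSin_half_ne_zero {n x : ℝ} (hx : x ≠ 0) (h : |n * x| ≤ π) :
    scaledSin (n / 2) x ≠ 0 := by
  refine mul_ne_zero hx (sinc_pos ?_).ne'
  rw [div_mul_eq_mul_div, abs_div, abs_two]
  linarith [pi_pos]

theorem symbol_pos {n : ℝ} {ξ : ℝ × ℝ} (hξ : ξ ≠ 0) (h : ξ ∈ brillouinZone n) :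
    0 < symbol (n, ξ) := by
  by_cases h₁ : ξ.1 = 0
  · have h₂ : ξ.2 ≠ 0 := fun h₂ => hξ (Prod.ext h₁ h₂)
    have := scaledSin_half_ne_zero h₂ h.2
    exact add_pos_of_nonneg_of_pos (sq_nonneg _) (by positivity)
  · have := scaledSin_half_ne_zero h₁ h.1
    exact add_pos_of_pos_of_nonneg (by positivity) (sq_nonneg _)

section LocallyBox

variable {a : ℝ} {p₀ : ℝ × ℝ × ℝ}

/- The face `|n ξ₁| = π` of the cell is a level set of `∂x (dispersion a)`, which vanishes there
and changes sign across it. -/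
theorem eventually_abs_mul_fst_le_pi_iff (ha : 0 < a) (hp : 0 < symbol p₀)
    (h : |p₀.1 * p₀.2.1| = π) :
    ∀ᶠ p in 𝓝 p₀, |p.1 * p.2.1| ≤ π ↔ 0 ≤ p₀.2.1 * ∂x (dispersion a) p := by
  have hx : p₀.2.1 ≠ 0 := fun hx => pi_ne_zero (by rw [← h, hx, mul_zero, abs_zero])
  have hsign : ∀ᶠ p : ℝ × ℝ × ℝ in 𝓝 p₀, 0 < p₀.2.1 * p.2.1 :=
    (by fun_prop : Continuous fun p : ℝ × ℝ × ℝ => p₀.2.1 * p.2.1).continuousAt.eventually_const_lt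
      (mul_self_pos.2 hx)
  have hlt : ∀ᶠ p : ℝ × ℝ × ℝ in 𝓝 p₀, |p.1 * p.2.1| < 2 * π :=
    (by fun_prop : Continuous fun p : ℝ × ℝ × ℝ => |p.1 * p.2.1|).continuousAt.eventually_lt_const
      (by linarith [pi_pos])
  filter_upwards [hsign, hlt, isOpen_symbol_pos.mem_nhds hp] with p hsign hlt hp
  have hp : 0 < symbol p := hp
  have factor : p₀.2.1 * ∂x (dispersion a) p
      = a * symbol p ^ (a - 1) / 2 * (p₀.2.1 * p.2.1) * sinc (p.1 * p.2.1) := by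
    rw [dirDeriv_dispersion hp, xSin, scaledSin]
    ring
  rw [factor, mul_nonneg_iff_of_pos_left (by positivity), sinc_nonneg_iff hlt]

theorem exists_eventually_abs_mul_fst_le_pi_iff (ha : 0 < a) (hp : 0 < symbol p₀)
    (h : |p₀.1 * p₀.2.1| ≤ π) :
    ∃ A B, ∀ᶠ p in 𝓝 p₀, |p.1 * p.2.1| ≤ π ↔ ∂x (dispersion a) p ∈ Icc A B := by
  set f := ∂x (dispersion a)
  have hf : ContinuousAt f p₀ :=
    ((contDiffOn_dirDeriv _ isOpen_symbol_pos (contDiffOn_dispersion a)).continuousOn p₀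
      hp).continuousAt (isOpen_symbol_pos.mem_nhds hp)
  have hle : ∀ᶠ p in 𝓝 p₀, f p ≤ f p₀ + 1 := hf.eventually_le_const (lt_add_one _)
  have hge : ∀ᶠ p in 𝓝 p₀, f p₀ - 1 ≤ f p := hf.eventually_const_le (sub_one_lt _)
  rcases h.lt_or_eq with hlt | heq
  · have hmem : ∀ᶠ p : ℝ × ℝ × ℝ in 𝓝 p₀, |p.1 * p.2.1| ≤ π :=
      (by fun_prop : Continuous fun p : ℝ × ℝ × ℝ =>
        |p.1 * p.2.1|).continuousAt.eventually_le_const hlt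
    refine ⟨f p₀ - 1, f p₀ + 1, ?_⟩
    filter_upwards [hle, hge, hmem] with p hle hge hmem
    exact iff_of_true hmem ⟨hge, hle⟩
  have hiff := eventually_abs_mul_fst_le_pi_iff ha hp heq
  have hx : p₀.2.1 ≠ 0 := fun hx => pi_ne_zero (by rw [← heq, hx, mul_zero, abs_zero])
  rcases hx.lt_or_gt with hx | hx
  · refine ⟨f p₀ - 1, 0, ?_⟩
    filter_upwards [hge, hiff] with p hge hiff
    rw [hiff, mem_Icc, and_iff_right hge, ← neg_mul_neg,
      mul_nonneg_iff_of_pos_left (neg_pos.2 hx), neg_nonneg]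
  · refine ⟨0, f p₀ + 1, ?_⟩
    filter_upwards [hle, hiff] with p hle hiff
    rw [hiff, mem_Icc, and_iff_left hle, mul_nonneg_iff_of_pos_left hx]

theorem exists_forall_abs_mul_le_pi_iff (n y₀ : ℝ) :
    ∃ A B, ∀ y ∈ Metric.closedBall y₀ 1, |n * y| ≤ π ↔ y ∈ Icc A B := by
  rcases eq_or_ne n 0 with rfl | hn
  · refine ⟨y₀ - 1, y₀ + 1, fun y hy => ?_⟩
    rw [← Real.closedBall_eq_Icc, zero_mul, abs_zero]
    exact iff_of_true pi_nonneg hy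
  · refine ⟨-(π / |n|), π / |n|, fun y _ => ?_⟩
    rw [mem_Icc, ← abs_le, le_div_iff₀ (abs_pos.2 hn), abs_mul, mul_comm]

theorem isLocallyBox_brillouinZone (ha : 0 < a) {n₀ : ℝ} {ξ₀ : ℝ × ℝ} (hξ₀ : ξ₀ ≠ 0)
    (h : ξ₀ ∈ brillouinZone n₀) :
    IsLocallyBox (∂x (dispersion a)) brillouinZone n₀ ξ₀ := by
  obtain ⟨A₁, B₁, hx⟩ := exists_eventually_abs_mul_fst_le_pi_iff ha (symbol_pos hξ₀ h) h.1
  obtain ⟨I, hI, B, hB, hprod⟩ := mem_nhds_prod_iff.1 hx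
  refine ⟨B ∩ Prod.snd ⁻¹' Metric.closedBall ξ₀.2 1, inter_mem hB
    (continuous_snd.continuousAt (Metric.closedBall_mem_nhds _ one_pos)),
    mem_of_superset hI fun n hn => ?_⟩
  obtain ⟨A₂, B₂, hy⟩ := exists_forall_abs_mul_le_pi_iff n ξ₀.2
  exact ⟨A₁, B₁, A₂, B₂, fun ξ hξ => and_congr (hprod (mk_mem_prod hn hξ.1)) (hy _ hξ.2)⟩

end LocallyBox

end BrillouinZone

/-! ### Local decay for the dispersion relation -/

section LocalDecay

variable {a n₀ : ℝ} {ξ₀ : ℝ × ℝ}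

theorem hasLocalDecay_dispersion_of_curvatureX_ne_zero (ha₀ : 0 < a) (ha : a ≠ 1 / 2) (ha₁ : a ≠ 1)
    (hξ₀ : ξ₀ ≠ 0) (hmem : ξ₀ ∈ brillouinZone n₀) (hH : curvatureX a (n₀, ξ₀) ≠ 0) :
    HasLocalDecay (dispersion a) brillouinZone (3 / 4) n₀ ξ₀ := by
  have hp := symbol_pos hξ₀ hmem
  obtain ⟨k, hk2, hk⟩ := exists_iterate_levelDeriv_dispersion_ne_zero ha₀.ne' ha ha₁ hp hH
  refine hasLocalDecay_of_iterate_levelDeriv_ne_zero isOpen_symbol_pos (contDiffOn_dispersion a) hp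
    (dirDeriv_dirDeriv_dispersion_ne_zero ha₀.ne' hp hH) hk ?_ measurableSet_brillouinZone
    (isLocallyBox_brillouinZone ha₀ hξ₀ hmem)
  calc (3 / 4 : ℝ) = 1 / 2 + 1 / ((2 : ℕ) + 2) := by norm_num
    _ ≤ 1 / 2 + 1 / (k + 2) := by gcongr

theorem dispersion_swap (a : ℝ) (p : ℝ × ℝ × ℝ) :
    dispersion a (p.1, p.2.swap) = dispersion a p :=
  congrArg (· ^ a) (add_comm _ _)

theorem swap_mem_brillouinZone {n : ℝ} {ξ : ℝ × ℝ} :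
    ξ.swap ∈ brillouinZone n ↔ ξ ∈ brillouinZone n :=
  and_comm

theorem curvatureX_swap (a n : ℝ) (ξ : ℝ × ℝ) :
    curvatureX a (n, ξ.swap) = curvatureY a (n, ξ) := by
  have : symbol (n, ξ.swap) = symbol (n, ξ) := add_comm _ _
  rw [curvatureX, curvatureY, this]
  rfl

theorem hasLocalDecay_dispersion_of_curvatureY_ne_zero (ha₀ : 0 < a) (ha : a ≠ 1 / 2) (ha₁ : a ≠ 1)
    (hξ₀ : ξ₀ ≠ 0) (hmem : ξ₀ ∈ brillouinZone n₀) (hH : curvatureY a (n₀, ξ₀) ≠ 0) :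
    HasLocalDecay (dispersion a) brillouinZone (3 / 4) n₀ ξ₀ := by
  refine .of_comp_equiv (.prodComm ℝ ℝ ℝ) Measure.measurePreserving_swap ?_
  have hW : (fun p : ℝ × ℝ × ℝ => dispersion a (p.1, ContinuousLinearEquiv.prodComm ℝ ℝ ℝ p.2))
      = dispersion a := funext (dispersion_swap a)
  have hS : (fun n => ContinuousLinearEquiv.prodComm ℝ ℝ ℝ ⁻¹' brillouinZone n) = brillouinZone :=
    funext fun n => Set.ext fun ξ => swap_mem_brillouinZone
  rw [hW, hS]
  exact hasLocalDecay_dispersion_of_curvatureX_ne_zero ha₀ ha ha₁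
    (fun h => hξ₀ (Prod.swap_injective h)) (swap_mem_brillouinZone.2 hmem)
    (by rwa [← curvatureX_swap] at hH)

theorem xSin_ne_zero_of_curvatureX_eq_zero {p : ℝ × ℝ × ℝ} (hp : 0 < symbol p)
    (hH : curvatureX a p = 0) : xSin p ≠ 0 := fun hs => by
  have hc : xCos p = 0 := by simpa [curvatureX, hs, hp.ne'] using hH
  simpa [hs, hc] using xCos_sq p

theorem ySin_ne_zero_of_curvatureY_eq_zero {p : ℝ × ℝ × ℝ} (hp : 0 < symbol p)
    (hH : curvatureY a p = 0) : ySin p ≠ 0 := fun hs => by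
  have hc : yCos p = 0 := by simpa [curvatureY, hs, hp.ne'] using hH
  simpa [hs, hc] using yCos_sq p

theorem abs_mul_lt_pi_of_scaledSin_ne_zero {n x : ℝ} (h : |n * x| ≤ π) (hs : scaledSin n x ≠ 0) :
    |n * x| < π := by
  refine h.lt_of_ne fun heq => hs ?_
  rw [scaledSin, ← sinc_abs, heq, sinc_of_ne_zero pi_ne_zero, sin_pi, zero_div, mul_zero]

theorem eventually_mem_brillouinZone (hmem : ξ₀ ∈ brillouinZone n₀) (hx : xSin (n₀, ξ₀) ≠ 0)
    (hy : ySin (n₀, ξ₀) ≠ 0) : ∀ᶠ p in 𝓝 (n₀, ξ₀), p.2 ∈ brillouinZone p.1 := by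
  have hx : ∀ᶠ p : ℝ × ℝ × ℝ in 𝓝 (n₀, ξ₀), |p.1 * p.2.1| ≤ π :=
    (by fun_prop : Continuous fun p : ℝ × ℝ × ℝ => |p.1 * p.2.1|).continuousAt.eventually_le_const
      (abs_mul_lt_pi_of_scaledSin_ne_zero hmem.1 hx)
  have hy : ∀ᶠ p : ℝ × ℝ × ℝ in 𝓝 (n₀, ξ₀), |p.1 * p.2.2| ≤ π :=
    (by fun_prop : Continuous fun p : ℝ × ℝ × ℝ => |p.1 * p.2.2|).continuousAt.eventually_le_const
      (abs_mul_lt_pi_of_scaledSin_ne_zero hmem.2 hy)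
  exact hx.and hy

/-- The shear `(x, y) ↦ (x, y + x)`. -/
noncomputable def shear : (ℝ × ℝ) ≃L[ℝ] ℝ × ℝ :=
  .skewProd (.refl ℝ ℝ) (.refl ℝ ℝ) (.id ℝ ℝ)

theorem shear_apply (ξ : ℝ × ℝ) : shear ξ = (ξ.1, ξ.2 + ξ.1) := rfl

theorem measurePreserving_shear : MeasurePreserving shear := by
  have : ⇑shear = fun ξ => (ξ.1, ξ.1 + ξ.2) := funext fun ξ => by rw [shear_apply, add_comm]
  rw [this]
  exact measurePreserving_prod_add volume volume

theorem dirDeriv_dirDeriv_dispersion_shear {p : ℝ × ℝ × ℝ} (hp : 0 < symbol (p.1, shear p.2))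
    (hX : curvatureX a (p.1, shear p.2) = 0) (hY : curvatureY a (p.1, shear p.2) = 0)
    (u v u' v' : ℝ) :
    dirDeriv (0, u', v') (dirDeriv (0, u, v) fun q => dispersion a (q.1, shear q.2)) p
      = (2 * u * u' + u * v' + v * u') * (a * symbol (p.1, shear p.2) ^ (a - 2) / 4
        * ((a - 1) * xSin (p.1, shear p.2) * ySin (p.1, shear p.2))) := by
  rw [dirDeriv_comp_equiv shear, dirDeriv_comp_equiv shear]
  simp only [shear_apply (u, v), shear_apply (u', v')]
  rw [dirDeriv_dirDeriv_dispersion hp, hX, hY]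
  ring

/- Where both pure second derivatives vanish the mixed one does not, so the Hessian is
nondegenerate; a shear makes the first variable a good one. -/
theorem hasLocalDecay_dispersion_of_curvature_eq_zero (ha₀ : 0 < a) (ha₁ : a ≠ 1) (hξ₀ : ξ₀ ≠ 0)
    (hmem : ξ₀ ∈ brillouinZone n₀) (hX : curvatureX a (n₀, ξ₀) = 0)
    (hY : curvatureY a (n₀, ξ₀) = 0) :
    HasLocalDecay (dispersion a) brillouinZone (3 / 4) n₀ ξ₀ := by
  refine .of_comp_equiv shear measurePreserving_shear ?_
  obtain ⟨ζ₀, rfl⟩ := shear.surjective ξ₀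
  rw [ContinuousLinearEquiv.symm_apply_apply]
  have hp := symbol_pos hξ₀ hmem
  have hxs := xSin_ne_zero_of_curvatureX_eq_zero hp hX
  have hys := ySin_ne_zero_of_curvatureY_eq_zero hp hY
  let e : ℝ × ℝ × ℝ → ℝ × ℝ × ℝ := fun p => (p.1, shear p.2)
  have he : ContDiff ℝ ∞ e := by fun_prop
  have hU : IsOpen (e ⁻¹' {p | 0 < symbol p}) := isOpen_symbol_pos.preimage he.continuous
  have hW : ContDiffOn ℝ ∞ (fun p => dispersion a (e p)) (e ⁻¹' {p | 0 < symbol p}) :=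
    (contDiffOn_dispersion a).comp he.contDiffOn fun _ hp => hp
  have hess := dirDeriv_dirDeriv_dispersion_shear (p := (n₀, ζ₀)) hp hX hY
  have hD : a * symbol (n₀, shear ζ₀) ^ (a - 2) / 4
      * ((a - 1) * xSin (n₀, shear ζ₀) * ySin (n₀, shear ζ₀)) ≠ 0 := by
    have := sub_ne_zero.2 ha₁
    positivity
  refine hasLocalDecay_of_iterate_levelDeriv_ne_zero hU hW hp (k := 0) ?_ ?_ (by norm_num)
    (fun n => shear.continuous.measurable (measurableSet_brillouinZone n))
    (isLocallyBox_of_eventually_mem ?_ ?_)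
  · rw [hess]
    simpa using hD
  · rw [Function.iterate_one, levelDeriv, levelSlope, hess, hess, hess, hess]
    simp [hD]
  · exact ((contDiffOn_dirDeriv _ hU hW).continuousOn _ hp).continuousAt (hU.mem_nhds hp)
  · exact he.continuous.continuousAt.eventually (eventually_mem_brillouinZone hmem hxs hys)

theorem hasLocalDecay_dispersion (ha₀ : 0 < a) (ha : a ≠ 1 / 2) (ha₁ : a ≠ 1) (hξ₀ : ξ₀ ≠ 0)
    (n₀ : ℝ) : HasLocalDecay (dispersion a) brillouinZone (3 / 4) n₀ ξ₀ := by
  by_cases hmem : ξ₀ ∈ brillouinZone n₀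
  · by_cases hX : curvatureX a (n₀, ξ₀) = 0
    · by_cases hY : curvatureY a (n₀, ξ₀) = 0
      · exact hasLocalDecay_dispersion_of_curvature_eq_zero ha₀ ha₁ hξ₀ hmem hX hY
      · exact hasLocalDecay_dispersion_of_curvatureY_ne_zero ha₀ ha ha₁ hξ₀ hmem hY
    · exact hasLocalDecay_dispersion_of_curvatureX_ne_zero ha₀ ha ha₁ hξ₀ hmem hX
  · exact hasLocalDecay_of_eventually_notMem
      (isClosed_setOf_mem_brillouinZone.isOpen_compl.mem_nhds hmem)

end LocalDecay

/-! ### Uniform decay and scaling -/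

section UniformDecay

theorem norm_planeWave {P : Type*} (W : P × ℝ × ℝ → ℝ) (η : ℝ × ℝ → ℝ) (v : ℝ × ℝ) (τ : ℝ) (n : P)
    (ξ : ℝ × ℝ) : ‖planeWave W η v τ n ξ‖ = ‖η ξ‖ := by
  rw [planeWave, norm_mul, norm_cexp_I_mul_ofReal, one_mul, Complex.norm_real]

theorem norm_setIntegral_planeWave_le {P : Type*} (W : P × ℝ × ℝ → ℝ) {η : ℝ × ℝ → ℝ}
    (hη : Integrable η) (v : ℝ × ℝ) (τ : ℝ) (n : P) (S : Set (ℝ × ℝ)) :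
    ‖∫ ξ in S, planeWave W η v τ n ξ‖ ≤ ∫ ξ, ‖η ξ‖ :=
  calc ‖∫ ξ in S, planeWave W η v τ n ξ‖ ≤ ∫ ξ in S, ‖planeWave W η v τ n ξ‖ :=
        norm_integral_le_integral_norm _
    _ = ∫ ξ in S, ‖η ξ‖ := by simp only [norm_planeWave]
    _ ≤ ∫ ξ, ‖η ξ‖ := setIntegral_le_integral hη.norm (.of_forall fun _ => norm_nonneg _)

theorem exists_forall_mem_brillouinZone_eq_zero {η : ℝ × ℝ → ℝ} (h₀ : 0 ∉ tsupport η) :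
    ∃ M, ∀ n > M, ∀ ξ ∈ brillouinZone n, η ξ = 0 := by
  obtain ⟨δ, hδ, hball⟩ := Metric.mem_nhds_iff.1 ((isClosed_tsupport η).isOpen_compl.mem_nhds h₀)
  refine ⟨π / δ, fun n hn ξ hξ => image_eq_zero_of_notMem_tsupport (hball ?_)⟩
  have hn₀ : 0 < n := (div_pos pi_pos hδ).trans hn
  have small : ∀ x, |n * x| ≤ π → |x| < δ := fun x hx => by
    rw [abs_mul, abs_of_pos hn₀, mul_comm, ← le_div_iff₀ hn₀] at hx
    exact hx.trans_lt ((div_lt_comm₀ hδ hn₀).1 hn)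
  rw [mem_ball_zero_iff, Prod.norm_def]
  exact max_lt (small _ hξ.1) (small _ hξ.2)

theorem continuous_dispersion {a : ℝ} (ha : 0 < a) : Continuous (dispersion a) :=
  contDiff_symbol.continuous.rpow_const fun _ => .inr ha.le

theorem exists_norm_setIntegral_dispersion_le {a : ℝ} (ha₀ : 0 < a) (ha : a ≠ 1 / 2) (ha₁ : a ≠ 1)
    {η : ℝ × ℝ → ℝ} (hη : ContDiff ℝ ∞ η) (hηc : HasCompactSupport η) (h₀ : 0 ∉ tsupport η) :
    ∃ C > 0, ∀ n > 0, ∀ (v : ℝ × ℝ) (τ : ℝ), 0 < τ →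
      ‖∫ ξ in brillouinZone n, planeWave (dispersion a) η v τ n ξ‖ ≤ C * τ ^ (-(3 / 4) : ℝ) := by
  obtain ⟨M, hM⟩ := exists_forall_mem_brillouinZone_eq_zero h₀
  obtain ⟨C, hC⟩ := HasLocalDecay.exists_forall_norm_setIntegral_le
    (fun n => (continuous_dispersion ha₀).comp (Continuous.prodMk_right n)) hη hηc
    (isCompact_Icc (a := 0) (b := M)) fun n₀ _ ξ₀ hξ₀ =>
      hasLocalDecay_dispersion ha₀ ha ha₁ (fun h => h₀ (h ▸ hξ₀)) n₀
  have hint : 0 ≤ ∫ ξ, ‖η ξ‖ := integral_nonneg fun _ => norm_nonneg _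
  refine ⟨|C| + (∫ ξ, ‖η ξ‖) + 1, by positivity, fun n hn v τ hτ => ?_⟩
  have hτ' : 0 ≤ τ ^ (-(3 / 4) : ℝ) := by positivity
  rcases lt_or_ge M n with hMn | hnM
  · have hzero : ∀ ξ ∈ brillouinZone n, planeWave (dispersion a) η v τ n ξ = 0 := fun ξ hξ => by
      rw [← norm_eq_zero, norm_planeWave, hM n hMn ξ hξ, norm_zero]
    rw [setIntegral_eq_zero_of_forall_eq_zero hzero, norm_zero]
    positivity
  rcases le_total 1 τ with h₁ | h₁
  · refine (hC n ⟨hn.le, hnM⟩ v τ h₁).trans (mul_le_mul_of_nonneg_right ?_ hτ')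
    linarith [le_abs_self C]
  · have hone : 1 ≤ τ ^ (-(3 / 4) : ℝ) :=
      one_le_rpow_of_pos_of_le_one_of_nonpos hτ h₁ (by norm_num)
    calc ‖∫ ξ in brillouinZone n, planeWave (dispersion a) η v τ n ξ‖ ≤ ∫ ξ, ‖η ξ‖ :=
          norm_setIntegral_planeWave_le _ (hη.continuous.integrable_of_hasCompactSupport hηc) ..
      _ ≤ |C| + (∫ ξ, ‖η ξ‖) + 1 := by linarith [abs_nonneg C]
      _ ≤ _ := le_mul_of_one_le_right (by positivity) hone

end UniformDecay

section Scaling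

open scoped Pointwise

theorem smul_brillouinZone {N : ℝ} (hN : 0 < N) :
    N • brillouinZone N = Icc ((-π, -π) : ℝ × ℝ) (π, π) := by
  ext ξ
  rw [mem_smul_set_iff_inv_smul_mem₀ hN.ne', brillouinZone, mem_ofPred, Prod.smul_fst,
    Prod.smul_snd, smul_eq_mul, smul_eq_mul, mul_inv_cancel_left₀ hN.ne',
    mul_inv_cancel_left₀ hN.ne', abs_le, abs_le, mem_Icc, Prod.le_def, Prod.le_def]
  exact and_and_and_comm

theorem setIntegral_Icc_pi_eq (F : ℝ × ℝ → ℂ) {N : ℝ} (hN : 0 < N) :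
    ∫ ξ in Icc ((-π, -π) : ℝ × ℝ) (π, π), F ξ = N ^ 2 • ∫ ζ in brillouinZone N, F (N • ζ) := by
  rw [Measure.setIntegral_comp_smul_of_pos volume F _ hN, smul_brillouinZone hN,
    Module.finrank_prod, Module.finrank_self, smul_inv_smul₀ (by positivity)]

theorem sin_sq_add_sin_sq_rpow {N : ℝ} (hN : 0 < N) (α : ℝ) (ζ : ℝ × ℝ) :
    (sin (N * ζ.1 / 2) ^ 2 + sin (N * ζ.2 / 2) ^ 2) ^ (α / 2)
      = N ^ α * dispersion (α / 2) (N, ζ) := by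
  have half : ∀ x, sin (N * x / 2) = N * (scaledSin (N / 2) x / 2) := fun x => by
    rw [mul_div_right_comm, ← mul_scaledSin]
    ring
  have hsymbol : sin (N * ζ.1 / 2) ^ 2 + sin (N * ζ.2 / 2) ^ 2 = N ^ (2 : ℝ) * symbol (N, ζ) := by
    rw [half, half, symbol, rpow_two]
    ring
  have hnonneg : 0 ≤ symbol (N, ζ) := add_nonneg (sq_nonneg _) (sq_nonneg _)
  rw [hsymbol, mul_rpow (by positivity) hnonneg, ← rpow_mul hN.le, mul_div_cancel₀ α two_ne_zero,
    dispersion]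

theorem planeWave_dispersion_smul {N : ℝ} (hN : 0 < N) (α : ℝ) (η : ℝ × ℝ → ℝ) (v : ℝ × ℝ)
    (τ : ℝ) (ζ : ℝ × ℝ) :
    Complex.exp (Complex.I * τ * ((v.1 * (N • ζ).1 + v.2 * (N • ζ).2
        - (sin ((N • ζ).1 / 2) ^ 2 + sin ((N • ζ).2 / 2) ^ 2) ^ (α / 2) : ℝ)))
        * (η ((N • ζ).1 / N, (N • ζ).2 / N))
      = planeWave (dispersion (α / 2)) η (N ^ (1 - α) • v) (τ * N ^ α) N ζ := by
  have hpow : N ^ (1 - α) * N ^ α = N := by rw [← rpow_add hN, sub_add_cancel, rpow_one]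
  simp only [Prod.smul_fst, Prod.smul_snd, smul_eq_mul, sin_sq_add_sin_sq_rpow hN,
    mul_div_cancel_left₀ _ hN.ne', planeWave]
  rw [mul_assoc, ← Complex.ofReal_mul]
  congr 4
  linear_combination -τ * (v.1 * ζ.1 + v.2 * ζ.2) * hpow

end Scaling

section AnnularBump

/-- The Littlewood–Paley bump `ψ(‖ξ‖) - ψ(2‖ξ‖)` on the plane, built from a radial cutoff `ψ`. -/
noncomputable def annularBump (ψ : ℝ → ℝ) (ξ : ℝ × ℝ) : ℝ :=
  ψ √(ξ.1 ^ 2 + ξ.2 ^ 2) - ψ (2 * √(ξ.1 ^ 2 + ξ.2 ^ 2))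

variable {ψ : ℝ → ℝ} {r : ℝ}

theorem eventually_annularBump_eq_zero (hr : 0 < r) (hψ : ∀ x ∈ Icc (-r) r, ψ x = 1) :
    annularBump ψ =ᶠ[𝓝 0] 0 := by
  have hlt : ∀ᶠ ξ : ℝ × ℝ in 𝓝 0, √(ξ.1 ^ 2 + ξ.2 ^ 2) < r / 2 :=
    (by fun_prop : Continuous fun ξ : ℝ × ℝ =>
      √(ξ.1 ^ 2 + ξ.2 ^ 2)).continuousAt.eventually_lt_const (by simpa using hr)
  filter_upwards [hlt] with ξ hξ
  have := sqrt_nonneg (ξ.1 ^ 2 + ξ.2 ^ 2)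
  rw [annularBump, hψ _ ⟨by linarith, by linarith⟩, hψ _ ⟨by linarith, by linarith⟩, sub_self,
    Pi.zero_apply]

theorem contDiff_annularBump (hψs : ContDiff ℝ ∞ ψ) (hr : 0 < r)
    (hψ : ∀ x ∈ Icc (-r) r, ψ x = 1) : ContDiff ℝ ∞ (annularBump ψ) := by
  refine contDiff_iff_contDiffAt.2 fun ξ => ?_
  rcases eq_or_ne ξ 0 with rfl | hξ
  · exact contDiffAt_const.congr_of_eventuallyEq (eventually_annularBump_eq_zero hr hψ)
  · have hne : ξ.1 ^ 2 + ξ.2 ^ 2 ≠ 0 := fun h => hξ (Prod.ext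
      (pow_eq_zero_iff two_ne_zero |>.1 (by linarith [sq_nonneg ξ.1, sq_nonneg ξ.2]))
      (pow_eq_zero_iff two_ne_zero |>.1 (by linarith [sq_nonneg ξ.1, sq_nonneg ξ.2])))
    have hs : ContDiffAt ℝ ∞ (fun ξ : ℝ × ℝ => √(ξ.1 ^ 2 + ξ.2 ^ 2)) ξ :=
      ContDiffAt.sqrt (by fun_prop) hne
    exact (hψs.contDiffAt.comp ξ hs).sub (hψs.contDiffAt.comp ξ (contDiffAt_const.mul hs))

theorem hasCompactSupport_annularBump (hψ : Function.support ψ ⊆ Iio r) :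
    HasCompactSupport (annularBump ψ) := by
  have vanish : ∀ t, r ≤ t → ψ t = 0 := fun t ht =>
    Function.notMem_support.1 fun h => (hψ h).not_ge ht
  refine .intro (isCompact_closedBall 0 r) fun ξ hξ => ?_
  have hlt : r < √(ξ.1 ^ 2 + ξ.2 ^ 2) := by
    rw [mem_closedBall_zero_iff, not_le] at hξ
    refine hξ.trans_le (max_le ?_ ?_) <;> refine abs_le_sqrt ?_ <;> nlinarith
  have := sqrt_nonneg (ξ.1 ^ 2 + ξ.2 ^ 2)
  rw [annularBump, vanish _ hlt.le, vanish _ (by linarith), sub_self]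

end AnnularBump

end LatticeDispersion

theorem stmt19_general (α : ℝ) (hα₀ : 0 < α) (hα₁ : α ≠ 1) (hα₂ : α ≠ 2)
    (η : ℝ × ℝ → ℝ) (hη : ContDiff ℝ (⊤ : ℕ∞) η) (hηc : HasCompactSupport η)
    (h₀ : 0 ∉ tsupport η) :
    ∃ C > 0, ∀ N : ℝ, 0 < N → ∀ v : ℝ × ℝ, ∀ τ : ℝ, 0 < τ →
        ‖∫ ξ in Set.Icc ((-π, -π) : ℝ × ℝ) ((π, π) : ℝ × ℝ),
            Complex.exp (Complex.I * (τ : ℂ) *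
              ((v.1 * ξ.1 + v.2 * ξ.2
                - (Real.sin (ξ.1 / 2) ^ 2 + Real.sin (ξ.2 / 2) ^ 2) ^ (α / 2) : ℝ) : ℂ))
            * ((η (ξ.1 / N, ξ.2 / N) : ℝ) : ℂ)‖
          ≤ C * N ^ (2 - 3 / 4 * α) * τ ^ (-(3 : ℝ) / 4) := by
  obtain ⟨C, hC, bound⟩ := LatticeDispersion.exists_norm_setIntegral_dispersion_le (a := α / 2)
    (by linarith) (fun h => hα₁ (by linarith)) (fun h => hα₂ (by linarith)) hη hηc h₀
  refine ⟨C, hC, fun N hN v τ hτ => ?_⟩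
  simp only [LatticeDispersion.setIntegral_Icc_pi_eq _ hN,
    LatticeDispersion.planeWave_dispersion_smul hN, norm_smul, norm_eq_abs, abs_sq]
  have hpow : N ^ (2 : ℝ) * (N ^ α) ^ (-(3 / 4) : ℝ) = N ^ (2 - 3 / 4 * α) := by
    rw [← rpow_mul hN.le, ← rpow_add hN]
    ring_nf
  calc N ^ 2 * ‖_‖ ≤ N ^ 2 * (C * (τ * N ^ α) ^ (-(3 / 4) : ℝ)) := by
        gcongr
        exact bound N hN _ _ (by positivity)
    _ = C * N ^ (2 - 3 / 4 * α) * τ ^ (-(3 : ℝ) / 4) := by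
        rw [← rpow_two, mul_rpow hτ.le (by positivity), ← hpow, neg_div]
        ring

/-- For `1 < α < 2` and a smooth even cutoff `ψ : ℝ → [0,1]` supported in
`(−2π, 2π)` with `ψ = 1` on `[−π,π]`, set `η(ξ) = ψ(‖ξ‖) − ψ(2‖ξ‖)` on `ℝ²`. Then there
is `C = C(α,ψ) > 0` such that for every dyadic `N = 2^(−k)` (`k ∈ ℕ ∪ {0}`), every
`v ∈ ℝ²`, and every `τ > 0`,
`|∫_{[−π,π]²} e^{iτ(v·ξ − w_α(ξ))} η(ξ/N) dξ| ≤ C·N^(2−(3/4)α)·τ^(−3/4)`. -/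
theorem stmt19 (α : ℝ) (hα1 : 1 < α) (hα2 : α < 2)
    (ψ : ℝ → ℝ) (hψs : ContDiff ℝ (⊤ : ℕ∞) ψ)
    (hψr : ∀ x, ψ x ∈ Set.Icc (0 : ℝ) 1)
    (hψe : ∀ x, ψ (-x) = ψ x)
    (hψsupp : Function.support ψ ⊆ Set.Ioo (-(2 * π)) (2 * π))
    (hψ1 : ∀ x ∈ Set.Icc (-π) π, ψ x = 1)
    (η : ℝ × ℝ → ℝ)
    (hη : ∀ ξ, η ξ = ψ (Real.sqrt (ξ.1 ^ 2 + ξ.2 ^ 2))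
        - ψ (2 * Real.sqrt (ξ.1 ^ 2 + ξ.2 ^ 2))) :
    ∃ C > 0, ∀ N : ℝ, (∃ k : ℕ, N = (2 : ℝ) ^ (-(k : ℤ))) →
      ∀ v : ℝ × ℝ, ∀ τ : ℝ, 0 < τ →
        ‖∫ ξ in Set.Icc ((-π, -π) : ℝ × ℝ) ((π, π) : ℝ × ℝ),
            Complex.exp (Complex.I * (τ : ℂ) *
              ((v.1 * ξ.1 + v.2 * ξ.2
                - (Real.sin (ξ.1 / 2) ^ 2 + Real.sin (ξ.2 / 2) ^ 2) ^ (α / 2) : ℝ) : ℂ))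
            * ((η (ξ.1 / N, ξ.2 / N) : ℝ) : ℂ)‖
          ≤ C * N ^ (2 - 3 / 4 * α) * τ ^ (-(3 : ℝ) / 4) := by
  obtain rfl : η = LatticeDispersion.annularBump ψ := funext hη
  obtain ⟨C, hC, bound⟩ := stmt19_general α (by linarith) hα1.ne' hα2.ne _
    (LatticeDispersion.contDiff_annularBump hψs pi_pos hψ1)
    (LatticeDispersion.hasCompactSupport_annularBump (hψsupp.trans Set.Ioo_subset_Iio_self))
    (notMem_tsupport_iff_eventuallyEq.2
      (LatticeDispersion.eventually_annularBump_eq_zero pi_pos hψ1))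
  exact ⟨C, hC, fun N ⟨k, hk⟩ => bound N (hk ▸ by positivity)⟩
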